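/- arXiv:1809.08619 — 2 statements merged into one kernel-verified Lean document; each statement's English description precedes it below -/
import Mathlib

section
/- Let (f̄,A) be a random GL(d,ℝ)-valued cocycle over an ergodic random transformation f̄ of X̄ = Ω×X. Then there exists a measurable map P : X → SL±(d,ℝ) (matrices of determinant ±1) such that the cohomologous random cocycle (f̄,B) given by B_i(x) = P(f_i(x))⁻¹ A_i(x) P(x) has the property that every (f̄,B)-invariant probability measure μ̂ on X × ℙ(ℝ^d) is a product measure, i.e. μ̂ = μ × ν for some probability measure ν on the projective space ℙ(ℝ^d). -/
open MeasureTheory Filter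
open scoped ENNReal

/-- Matrices are measurable as functions of their entries. -/
instance matrixMeasurableSpace {m n α : Type*} [MeasurableSpace α] :
    MeasurableSpace (Matrix m n α) :=
  show MeasurableSpace (m → n → α) from inferInstance

/-- The shift map on two-sided sequences. -/
def shift {Y : Type*} (ω : ℤ → Y) : ℤ → Y := fun n => ω (n + 1)

/-- The skew-shift `f̄(ω,x) = (θω, f_{ω₀}(x))` of a random transformation. -/
def fbar {Y X : Type*} (f : Y → X → X) : (ℤ → Y) × X → (ℤ → Y) × X :=
  fun q => (shift q.1, f (q.1 0) q.2)

/-- The locally constant map `Ā(ω,x) = A_{ω₀}(x)` defining a random cocycle. -/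
def Abar {Y X G : Type*} (A : Y → X → G) : (ℤ → Y) × X → G := fun q => A (q.1 0) q.2

/-- Iterates of a cocycle: `cocycleIter T A n z = A(T^{n-1} z) ⋯ A(T z) A(z)`. -/
def cocycleIter {Z G : Type*} [Monoid G] (T : Z → Z) (A : Z → G) : ℕ → Z → G
  | 0, _ => 1
  | n + 1, z => cocycleIter T A n (T z) * A z

/-- `Pr` is the two-sided Bernoulli product measure `p^ℤ` on `ℤ → Y`: the measure of
every cylinder is the corresponding product of `p`-measures. -/
def IsBernoulli {Y : Type*} [MeasurableSpace Y] (p : Measure Y)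
    (Pr : Measure (ℤ → Y)) : Prop :=
  ∀ (s : Finset ℤ) (t : ℤ → Set Y), (∀ i ∈ s, MeasurableSet (t i)) →
    Pr {ω | ∀ i ∈ s, ω i ∈ t i} = ∏ i ∈ s, p (t i)

/-- The projective space of `ℝ^d`. -/
abbrev Proj (d : ℕ) := Projectivization ℝ (Fin d → ℝ)

noncomputable instance (d : ℕ) : MeasurableSpace (Proj d) :=
  show MeasurableSpace (Quotient _) from inferInstance

lemma glInjective {d : ℕ} (A : GL (Fin d) ℝ) :
    Function.Injective (Matrix.toLin' (A : Matrix (Fin d) (Fin d) ℝ)) := by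
  have h : Function.LeftInverse
      (Matrix.toLin' (((A⁻¹ : GL (Fin d) ℝ)) : Matrix (Fin d) (Fin d) ℝ))
      (Matrix.toLin' ((A : Matrix (Fin d) (Fin d) ℝ))) := by
    intro v
    rw [← Matrix.toLin'_mul_apply]
    have h1 : ((A⁻¹ : GL (Fin d) ℝ) : Matrix (Fin d) (Fin d) ℝ) *
        (A : Matrix (Fin d) (Fin d) ℝ) = 1 := by
      exact_mod_cast A.inv_mul
    rw [h1]
    simp
  exact h.injective

/-- The projective action of an invertible matrix on `ℙ(ℝ^d)`. -/
noncomputable def projAction {d : ℕ} (A : GL (Fin d) ℝ) : Proj d → Proj d :=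
  Projectivization.map (Matrix.toLin' (A : Matrix (Fin d) (Fin d) ℝ)) (glInjective A)

/-! Disintegrate countably many invariant measures of `A` along `μ`: this gives a measurable map `z`
from `X` to a power of the space of probability measures on the projective space, equivariant in the
sense that `z (f i x) = A i x • z x`. Orbits of `GL` on that power which lie in each other's closure
coincide, because the degenerate limits of projective maps relating two such orbits, made mutually
inverse by Ellis' idempotent lemma, agree with an invertible linear map on the set carrying the
measures. Hence the orbit space is T0, and by ergodicity `z` stays in a single orbit; a
measurable selection gives `z x = s x • z₀`, so that the conjugacy by `s`, rescaled to have
determinant of modulus `1`, turns the chosen measures into products. All invariant measures become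
products at once because they are functionals of norm at most `1` on the separable space
`L¹(μ; C(ℙ))`, hence determined by countably many of them. -/

namespace RandomCocycle

open Topology Set

section Ergodic

variable {X Y : Type*} [MeasurableSpace X] [MeasurableSpace Y] {μ : Measure X} {p : Measure Y}
  {f : Y → X → X}

/-- Ergodicity of a family of maps `f i`, `i` distributed according to `p`: a measurable set which
is invariant modulo null sets under `p`-almost every `f i` is null or conull. -/
def IsErgodicFamily (μ : Measure X) (p : Measure Y) (f : Y → X → X) : Prop :=
  ∀ S : Set X, MeasurableSet S → (∀ᵐ i ∂p, f i ⁻¹' S =ᵐ[μ] S) → EventuallyConst S (ae μ)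

theorem measurePreserving_eval_of_isBernoulli {Pr : Measure (ℤ → Y)} (hPr : IsBernoulli p Pr)
    (n : ℤ) : MeasurePreserving (Function.eval n) Pr p := by
  refine ⟨measurable_pi_apply n, Measure.ext fun t ht => ?_⟩
  rw [Measure.map_apply (measurable_pi_apply n) ht]
  simpa [Function.eval, preimage] using hPr {n} (fun _ => t) fun _ _ => ht

theorem isErgodicFamily_of_quasiErgodic_fbar [SFinite μ] {Pr : Measure (ℤ → Y)}
    [IsProbabilityMeasure Pr] (hPr : MeasurePreserving (Function.eval 0) Pr p)
    (hf : Measurable fun q : Y × X => f q.1 q.2) (herg : QuasiErgodic (fbar f) (Pr.prod μ)) :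
    IsErgodicFamily μ p f := by
  intro S hS hinv
  have hm : Measurable fun q : (ℤ → Y) × X => f (q.1 0) q.2 :=
    hf.comp (f := fun q : (ℤ → Y) × X => (q.1 0, q.2))
      (((measurable_pi_apply 0).comp measurable_fst).prodMk measurable_snd)
  have hinv' : fbar f ⁻¹' (Prod.snd ⁻¹' S) =ᵐ[Pr.prod μ] Prod.snd ⁻¹' S := by
    refine eventuallyEq_set.2 ((Measure.ae_prod_iff_ae_ae ?_).2 ?_)
    · exact (hm hS).iff (measurable_snd hS)
    · exact (hPr.quasiMeasurePreserving.ae hinv).mono fun ω hω => eventuallyEq_set.1 hω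
  exact (measurePreserving_snd.aeconst_preimage hS.nullMeasurableSet).1
    (herg.aeconst_set₀ (measurable_snd hS).nullMeasurableSet hinv')

end Ergodic

section OrbitSpace

variable {G Z : Type*} [Group G] [MulAction G Z] [TopologicalSpace Z] [ContinuousConstSMul G Z]

theorem t0Space_orbitRel_quotient
    (h : ∀ z z' : Z, z' ∈ closure (MulAction.orbit G z) → z ∈ closure (MulAction.orbit G z') →
      z' ∈ MulAction.orbit G z) :
    T0Space (MulAction.orbitRel.Quotient G Z) := by
  have mem_closure {z z' : Z} (hzz' : (⟦z⟧ : MulAction.orbitRel.Quotient G Z) ∈ closure {⟦z'⟧}) :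
      z ∈ closure (MulAction.orbit G z') := by
    have := (isOpenMap_quotient_mk'_mul (Γ := G)).preimage_closure_eq_closure_preimage
      continuous_quotient_mk' {⟦z'⟧}
    refine closure_mono (fun w hw => ?_) (this.subset hzz')
    exact Quotient.exact hw
  refine (t0Space_iff_inseparable _).2 fun q q' => ?_
  induction q, q' using Quotient.inductionOn₂ with | _ z z' => ?_
  intro hqq'
  obtain ⟨hq, hq'⟩ := inseparable_iff_mem_closure.1 hqq'
  exact Quotient.sound (h z' z (mem_closure hq) (mem_closure hq'))

theorem exists_ae_mem_orbit {X Y : Type*} [MeasurableSpace X] [MeasurableSpace Y] {μ : Measure X}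
    [NeZero μ] {p : Measure Y} {f : Y → X → X} (hf : IsErgodicFamily μ p f)
    [SecondCountableTopology Z] [MeasurableSpace Z] [OpensMeasurableSpace Z]
    [T0Space (MulAction.orbitRel.Quotient G Z)] {z : X → Z} (hz : Measurable z)
    (hinv : ∀ᵐ i ∂p, ∀ᵐ x ∂μ, z (f i x) ∈ MulAction.orbit G (z x)) :
    ∃ z₀, ∀ᵐ x ∂μ, z x ∈ MulAction.orbit G z₀ := by
  have : SecondCountableTopology (MulAction.orbitRel.Quotient G Z) :=
    ContinuousConstSMul.secondCountableTopology
  let q : X → MulAction.orbitRel.Quotient G Z := fun x => ⟦z x⟧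
  have : Nonempty (MulAction.orbitRel.Quotient G Z) := (nonempty_of_neBot (ae μ)).map q
  obtain ⟨c, hc⟩ : ∃ c, q =ᵐ[μ] Function.const X c := by
    refine exists_eventuallyEq_const_of_forall_separating IsOpen fun U hU => ?_
    refine eventuallyConst_set.1
      (hf (q ⁻¹' U) (hz (hU.preimage continuous_quotient_mk').measurableSet) ?_)
    filter_upwards [hinv] with i hi
    filter_upwards [hi] with x hx
    have : q (f i x) = q x := Quotient.sound hx
    exact congrArg (· ∈ U) this
  induction c using Quotient.inductionOn with | _ z₀ => ?_
  exact ⟨z₀, hc.mono fun x hx => Quotient.exact hx⟩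

end OrbitSpace

section Transporter

variable {E Z : Type*} [TopologicalSpace E] [TopologicalSpace Z]

/-- The `(z, z')` slice of the enveloping (Ellis) semigroup of `G` on `E`: the pointwise limits `e`
of maps `p ↦ g i • p` along filters for which, moreover, `g i • z` tends to `z'`. -/
def transporter (G : Type*) [Group G] [MulAction G E] [MulAction G Z] (z z' : Z) : Set (E → E) :=
  {e | (e, z') ∈ closure (MulAction.orbit G ((id : E → E), z))}

variable {G : Type*} [Group G] [MulAction G E] [MulAction G Z]

theorem isClosed_transporter (z z' : Z) : IsClosed (transporter G z z' : Set (E → E)) :=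
  isClosed_closure.preimage (Continuous.prodMk_left z')

theorem transporter_nonempty [CompactSpace E] {z z' : Z} (h : z' ∈ closure (MulAction.orbit G z)) :
    (transporter G z z' : Set (E → E)).Nonempty := by
  have horbit : MulAction.orbit G z ⊆ Prod.snd '' MulAction.orbit G ((id : E → E), z) := by
    rintro _ ⟨g, rfl⟩
    exact ⟨_, ⟨g, rfl⟩, rfl⟩
  obtain ⟨⟨e, _⟩, he, rfl⟩ := closure_minimal (horbit.trans (image_mono subset_closure))
    (isClosedMap_snd_of_compactSpace _ isClosed_closure) h
  exact ⟨e, he⟩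

theorem exists_ultrafilter_of_mem_transporter {z z' : Z} {e : E → E}
    (he : e ∈ transporter G z z') :
    ∃ U : Ultrafilter G, (∀ p, Tendsto (fun g : G => g • p) U (𝓝 (e p))) ∧
      Tendsto (fun g : G => g • z) U (𝓝 z') := by
  obtain ⟨U, hU⟩ : ∃ U : Ultrafilter G,
      Tendsto (fun g : G => g • ((id : E → E), z)) U (𝓝 (e, z')) := by
    rw [transporter, mem_ofPred_eq, mem_closure_iff_clusterPt, MulAction.orbit, ← image_univ,
      ← map_principal, principal_univ] at he
    simpa using mapClusterPt_iff_ultrafilter.1 he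
  exact ⟨U, fun p => (((continuous_apply p).comp continuous_fst).tendsto _).comp hU,
    (continuous_snd.tendsto _).comp hU⟩

variable [ContinuousConstSMul G E] [ContinuousConstSMul G Z]

theorem comp_mem_transporter {z z' z'' : Z} {e e' : E → E} (he' : e' ∈ transporter G z' z'')
    (he : e ∈ transporter G z z') : e' ∘ e ∈ transporter G z z'' := by
  have hcont : Continuous fun q : (E → E) × Z => (q.1 ∘ e, q.2) := by
    simp only [Function.comp_def]
    fun_prop
  have horbit : MapsTo (fun q : (E → E) × Z => (q.1 ∘ e, q.2))
      (MulAction.orbit G ((id : E → E), z')) (closure (MulAction.orbit G ((id : E → E), z))) := by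
    rintro _ ⟨g, rfl⟩
    exact smul_closure_orbit_subset g _ ⟨_, he, rfl⟩
  exact closure_minimal horbit (isClosed_closure.preimage hcont) he'

/-- An idempotent `ψ ∘ φ` exists by Ellis' lemma; multiplying by it once more makes the two
transporters generalized inverses of each other. -/
theorem exists_transporter_comp_eq [CompactSpace E] [T2Space E] {z z' : Z}
    (h : z' ∈ closure (MulAction.orbit G z)) (h' : z ∈ closure (MulAction.orbit G z')) :
    ∃ φ ∈ (transporter G z z' : Set (E → E)), ∃ ψ ∈ (transporter G z' z : Set (E → E)),
      φ ∘ ψ ∘ φ = φ ∧ ψ ∘ φ ∘ ψ = ψ := by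
  obtain ⟨φ, hφ⟩ := transporter_nonempty (E := E) h
  let _ : Semigroup (E → E) := { mul := (· ∘ ·), mul_assoc := fun _ _ _ => rfl }
  have hcont (r : E → E) : Continuous fun a : E → E => a ∘ r :=
    continuous_pi fun p => continuous_apply (r p)
  obtain ⟨_, ⟨ψ, hψ, rfl⟩, hidem⟩ := exists_idempotent_in_compact_subsemigroup hcont
    ((fun a => a ∘ φ) '' transporter G z' z) ((transporter_nonempty h').image _)
    ((isClosed_transporter z' z).isCompact.image (hcont φ)) (by
      rintro _ ⟨a, ha, rfl⟩ _ ⟨b, hb, rfl⟩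
      exact ⟨a ∘ φ ∘ b, comp_mem_transporter ha (comp_mem_transporter hφ hb), rfl⟩)
  have hidem (p : E) : ψ (φ (ψ (φ p))) = ψ (φ p) := congrFun hidem p
  have hψφ : ψ ∘ φ ∈ transporter G z z := comp_mem_transporter hψ hφ
  refine ⟨φ ∘ ψ ∘ φ, comp_mem_transporter hφ hψφ, (ψ ∘ φ) ∘ ψ, comp_mem_transporter hψφ hψ,
    funext fun p => ?_, funext fun p => ?_⟩ <;>
  simp [hidem]

end Transporter

section QuasiLinear

open scoped LinearAlgebra.Projectivization

variable {𝕜 V : Type*} [Field 𝕜] [AddCommGroup V] [Module 𝕜 V]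

/-- The map `e` of projective space is given by `T` at the classes of those vectors of `s` which
`T` does not annihilate. -/
def IsInducedOn (e : ℙ 𝕜 V → ℙ 𝕜 V) (T : V →ₗ[𝕜] V) (s : Set V) : Prop :=
  ∀ v (hv : v ≠ 0), v ∈ s → ∀ hTv : T v ≠ 0,
    e (Projectivization.mk 𝕜 v hv) = Projectivization.mk 𝕜 (T v) hTv

/-- Quasi-linear (or quasi-projective) maps: on every nonzero subspace they are induced by a
nonzero linear map, away from its kernel. These are the pointwise limits of projective maps. -/
def IsQuasiLinear (e : ℙ 𝕜 V → ℙ 𝕜 V) : Prop :=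
  ∀ K : Submodule 𝕜 V, K ≠ ⊥ → ∃ T : V →ₗ[𝕜] V, (∃ v ∈ K, T v ≠ 0) ∧ IsInducedOn e T K

/-- The nonzero vectors whose class is fixed by a map of projective space. -/
def fixedVectors (u : ℙ 𝕜 V → ℙ 𝕜 V) : Set V :=
  {v | ∃ hv : v ≠ 0, u (Projectivization.mk 𝕜 v hv) = Projectivization.mk 𝕜 v hv}

theorem IsInducedOn.exists_eq_smul {u : ℙ 𝕜 V → ℙ 𝕜 V} {U : V →ₗ[𝕜] V} {s : Set V}
    (hU : IsInducedOn u U s) {v : V} (hv : v ∈ s) (hfix : v ∈ fixedVectors u) :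
    ∃ a : 𝕜, U v = a • v := by
  obtain ⟨hv0, hfix⟩ := hfix
  by_cases hUv : U v = 0
  · exact ⟨0, by simpa using hUv⟩
  · rw [hU v hv0 hv hUv, Projectivization.mk_eq_mk_iff'] at hfix
    exact hfix.imp fun a ha => ha.symm

theorem exists_scalar_of_forall_exists_scalar {I : Submodule 𝕜 V} {L : V →ₗ[𝕜] V}
    (h : ∀ v ∈ I, ∃ a : 𝕜, L v = a • v) : ∃ a : 𝕜, ∀ v ∈ I, L v = a • v := by
  have hmap : ∀ v ∈ I, L v ∈ I := fun v hv => by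
    obtain ⟨a, ha⟩ := h v hv
    exact ha ▸ I.smul_mem a hv
  obtain ⟨a, ha⟩ := LinearMap.exists_eq_smul_id_of_forall_notLinearIndependent
    (f := L.restrict hmap) fun v hli => by
      obtain ⟨a, ha⟩ := h v.1 v.2
      have := LinearIndependent.pair_iff.1 hli a (-1) (by ext1; simp [ha])
      simp at this
  exact ⟨a, fun v hv => by simpa using congrArg Subtype.val (LinearMap.congr_fun ha ⟨v, hv⟩)⟩

theorem sub_mem_span_inter_ker {s : Set V} {π : V →ₗ[𝕜] V} (hπ : ∀ v ∈ s, π v = 0 ∨ π v = v)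
    {w : V} (hw : w ∈ Submodule.span 𝕜 s) :
    w - π w ∈ Submodule.span 𝕜 (s ∩ LinearMap.ker π) := by
  have : Submodule.span 𝕜 s ≤
      (Submodule.span 𝕜 (s ∩ LinearMap.ker π)).comap (LinearMap.id - π) := by
    refine Submodule.span_le.2 fun v hv => ?_
    rcases hπ v hv with h | h
    · simpa [h] using
        Submodule.subset_span (R := 𝕜) (s := s ∩ (LinearMap.ker π : Set V)) ⟨hv, h⟩
    · simp [h]
  exact this hw

/-- If `T` induces `φ` and `S` induces `ψ` on `T(I)`, then `S ∘ T` induces the identity of `ℙ(I)`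
off its kernel, so it is a nonzero homothety of `I`. -/
theorem IsInducedOn.ne_zero_of_leftInverse {φ ψ : ℙ 𝕜 V → ℙ 𝕜 V} (hψ : IsQuasiLinear ψ)
    {I : Submodule 𝕜 V} {T : V →ₗ[𝕜] V} (hT : IsInducedOn φ T I) (hT0 : ∃ v ∈ I, T v ≠ 0)
    (hinv : ∀ v (hv : v ≠ 0), v ∈ I →
      ψ (φ (Projectivization.mk 𝕜 v hv)) = Projectivization.mk 𝕜 v hv)
    {v : V} (hv : v ∈ I) (hv0 : v ≠ 0) : T v ≠ 0 := by
  obtain ⟨v₀, hv₀, hTv₀⟩ := hT0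
  have hTI : I.map T ≠ ⊥ := (Submodule.ne_bot_iff _).2 ⟨T v₀, ⟨v₀, hv₀, rfl⟩, hTv₀⟩
  obtain ⟨S, ⟨_, ⟨v₁, hv₁, rfl⟩, hSv₁⟩, hS⟩ := hψ (I.map T) hTI
  obtain ⟨a, ha⟩ : ∃ a : 𝕜, ∀ v ∈ I, (S ∘ₗ T) v = a • v := by
    refine exists_scalar_of_forall_exists_scalar fun v hv => ?_
    by_cases hSTv : S (T v) = 0
    · exact ⟨0, by simpa using hSTv⟩
    have hTv : T v ≠ 0 := fun h => hSTv (by simp [h])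
    have hv0 : v ≠ 0 := fun h => hTv (by simp [h])
    have h := hinv v hv0 hv
    rw [hT v hv0 hv hTv, hS _ hTv ⟨v, hv, rfl⟩ hSTv, Projectivization.mk_eq_mk_iff'] at h
    exact h.imp fun a ha => ha.symm
  have ha0 : a ≠ 0 := by
    rintro rfl
    exact hSv₁ (by simpa using ha v₁ hv₁)
  intro hTv
  have := ha v hv
  simp [hTv, ha0, eq_comm, hv0] at this

/-- If `U` induces the idempotent `u` on `K`, then `U ∘ U` is a multiple of `U` on `K`. Rescaling
`U` turns it into a projection. -/
theorem exists_projection_of_quasiLinear {u : ℙ 𝕜 V → ℙ 𝕜 V} (hu : IsQuasiLinear u)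
    (huu : ∀ p, u (u p) = u p) {K : Submodule 𝕜 V} (hK0 : K ≠ ⊥)
    (hK : K ≤ Submodule.span 𝕜 (fixedVectors u ∩ K)) :
    ∃ π : V →ₗ[𝕜] V, (∃ v ∈ K, π v ≠ 0) ∧ (∀ v ∈ K, π v ≠ 0 → π v ∈ fixedVectors u) ∧
      ∀ v ∈ fixedVectors u ∩ K, π v = 0 ∨ π v = v := by
  obtain ⟨U, ⟨v₀, hv₀, hUv₀⟩, hU⟩ := hu K hK0
  have heig : ∀ v ∈ fixedVectors u ∩ K, ∃ a : 𝕜, U v = a • v := fun v hv =>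
    hU.exists_eq_smul hv.2 hv.1
  have hUK : K ≤ K.comap U := hK.trans <| Submodule.span_le.2 fun v hv => by
    obtain ⟨a, ha⟩ := heig v hv
    simpa [ha] using K.smul_mem a hv.2
  have hUfix : ∀ v ∈ K, U v ≠ 0 → U v ∈ fixedVectors u := fun v hv hUv => by
    have hv0 : v ≠ 0 := fun h => hUv (by simp [h])
    exact ⟨hUv, by rw [← hU v hv0 hv hUv, huu]⟩
  obtain ⟨a, ha⟩ : ∃ a : 𝕜, ∀ w ∈ K.map U, U w = a • w := by
    refine exists_scalar_of_forall_exists_scalar ?_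
    rintro _ ⟨v, hv, rfl⟩
    by_cases hUv : U v = 0
    · exact ⟨0, by simp [hUv]⟩
    · exact heig _ ⟨hUfix v hv hUv, hUK hv⟩
  have hfix : ∀ v ∈ fixedVectors u ∩ K, U v ≠ 0 → U v = a • v := fun v hv hUv => by
    obtain ⟨b, hb⟩ := heig v hv
    have hab : b • U v = a • U v := by rw [← ha (U v) ⟨v, hv.2, rfl⟩, hb, map_smul, hb]
    rwa [← smul_left_injective 𝕜 hUv hab]
  have ha0 : a ≠ 0 := by
    rintro rfl
    have : K ≤ LinearMap.ker U := hK.trans <| Submodule.span_le.2 fun v hv => by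
      by_contra hUv
      exact hUv (by simpa using hfix v hv hUv)
    exact hUv₀ (this hv₀)
  refine ⟨a⁻¹ • U, ⟨v₀, hv₀, smul_ne_zero (inv_ne_zero ha0) hUv₀⟩,
    fun v hv hv0 => ?_, fun v hv => ?_⟩
  · have := hUfix _ (K.smul_mem a⁻¹ hv) (by simpa using hv0)
    simpa using this
  · refine or_iff_not_imp_left.2 fun hv0 => ?_
    have hUv : U v ≠ 0 := fun h => hv0 (by simp [h])
    simp [hfix v hv hUv, ha0]

theorem exists_isInducedOn_fixedVectors_inter [FiniteDimensional 𝕜 V] {u φ ψ : ℙ 𝕜 V → ℙ 𝕜 V}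
    (hu : IsQuasiLinear u) (hφ : IsQuasiLinear φ) (hψ : IsQuasiLinear ψ)
    (huu : ∀ p, u (u p) = u p) (hinv : ∀ p, u p = p → ψ (φ p) = p) (K : Submodule 𝕜 V)
    (hK : K ≤ Submodule.span 𝕜 (fixedVectors u ∩ K)) :
    ∃ T : V →ₗ[𝕜] V, IsInducedOn φ T (fixedVectors u ∩ K) ∧
      ∀ v ∈ fixedVectors u ∩ K, T v ≠ 0 := by
  induction K using WellFoundedLT.induction with | _ K ih
  by_cases hK0 : K = ⊥
  · subst hK0
    have h0 {v : V} (hv0 : v ≠ 0) (hv : v ∈ (fixedVectors u ∩ (⊥ : Submodule 𝕜 V) : Set V)) :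
        False := hv0 hv.2
    exact ⟨0, fun v hv0 hv => (h0 hv0 hv).elim, fun v hv => (h0 hv.1.1 hv).elim⟩
  obtain ⟨π, ⟨v₀, hv₀, hπv₀⟩, hπfix, hπ⟩ := exists_projection_of_quasiLinear hu huu hK0 hK
  have hlt : K ⊓ LinearMap.ker π < K := inf_le_left.lt_of_not_ge fun h => hπv₀ (h hv₀).2
  have hker : K ⊓ LinearMap.ker π ≤
      Submodule.span 𝕜 (fixedVectors u ∩ ↑(K ⊓ LinearMap.ker π)) := fun w hw => by
    simpa [LinearMap.mem_ker.1 hw.2, inter_assoc] using sub_mem_span_inter_ker hπ (hK hw.1)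
  obtain ⟨T', hT', hT'0⟩ := ih _ hlt hker
  obtain ⟨T, hT0, hT⟩ := hφ (K.map π) ((Submodule.ne_bot_iff _).2 ⟨_, ⟨v₀, hv₀, rfl⟩, hπv₀⟩)
  have hTinj : ∀ v ∈ K.map π, v ≠ 0 → T v ≠ 0 := by
    refine fun v => hT.ne_zero_of_leftInverse hψ hT0 ?_
    rintro _ hw ⟨w, hwK, rfl⟩
    exact hinv _ (hπfix w hwK hw).2
  let R : V →ₗ[𝕜] V := T ∘ₗ π + T' ∘ₗ (LinearMap.id - π)
  have hR : ∀ v ∈ fixedVectors u ∩ K,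
      (R v = T' v ∧ v ∈ fixedVectors u ∩ ↑(K ⊓ LinearMap.ker π)) ∨
      (R v = T v ∧ v ∈ K.map π) := fun v hv => by
    rcases hπ v hv with h | h
    · exact .inl ⟨by simp [R, h], hv.1, hv.2, h⟩
    · exact .inr ⟨by simp [R, h], v, hv.2, h⟩
  refine ⟨R, fun v hv0 hv hRv => ?_, fun v hv => ?_⟩
  · rcases hR v hv with ⟨h, hv'⟩ | ⟨h, hv'⟩ <;> simp only [h] at hRv ⊢
    · exact hT' v hv0 hv' hRv
    · exact hT v hv0 hv' hRv
  · rcases hR v hv with ⟨h, hv'⟩ | ⟨h, hv'⟩ <;> rw [h]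
    · exact hT'0 v hv'
    · exact hTinj v hv' hv.1.1

theorem exists_linearEquiv_eqOn [FiniteDimensional 𝕜 V] {S T : V →ₗ[𝕜] V} {F : Set V}
    (hST : ∀ v ∈ F, ∃ a : 𝕜, a ≠ 0 ∧ S (T v) = a • v) :
    ∃ e : V ≃ₗ[𝕜] V, EqOn e T F := by
  let K := Submodule.span 𝕜 F
  have hmap : ∀ v ∈ K, (S ∘ₗ T) v ∈ K := by
    have : K ≤ K.comap (S ∘ₗ T) := Submodule.span_le.2 fun v hv => by
      obtain ⟨a, -, ha⟩ := hST v hv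
      simpa [ha] using K.smul_mem a (Submodule.subset_span hv)
    exact this
  have hsurj : Function.Surjective ((S ∘ₗ T).restrict hmap) := by
    rintro ⟨w, hw⟩
    have : K ≤ K.map (S ∘ₗ T) := Submodule.span_le.2 fun v hv => by
      obtain ⟨a, ha0, ha⟩ := hST v hv
      exact ⟨a⁻¹ • v, K.smul_mem _ (Submodule.subset_span hv), by simp [ha, ha0]⟩
    obtain ⟨v, hv, hvw⟩ := this hw
    exact ⟨⟨v, hv⟩, Subtype.ext hvw⟩
  have hinj : Function.Injective (T.domRestrict K) := fun x y hxy => by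
    refine LinearMap.injective_iff_surjective.2 hsurj (Subtype.ext ?_)
    simpa using congrArg S hxy
  obtain ⟨e, he⟩ := Submodule.exists_linearEquiv_restrict_eq
    (LinearEquiv.ofInjective (T.domRestrict K) hinj)
  exact ⟨e, fun v hv => by simpa using (he ⟨v, Submodule.subset_span hv⟩).symm⟩

theorem exists_isInducedOn_fixedVectors [FiniteDimensional 𝕜 V] {φ ψ : ℙ 𝕜 V → ℙ 𝕜 V}
    (hφ : IsQuasiLinear φ) (hψ : IsQuasiLinear ψ) (hψφ : IsQuasiLinear (ψ ∘ φ))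
    (h : φ ∘ ψ ∘ φ = φ) :
    ∃ T : V →ₗ[𝕜] V, IsInducedOn φ T (fixedVectors (ψ ∘ φ)) ∧
      ∀ v ∈ fixedVectors (ψ ∘ φ), T v ≠ 0 := by
  have hF := inter_eq_left.2 (Submodule.subset_span (R := 𝕜) (s := fixedVectors (ψ ∘ φ)))
  rw [← hF]
  exact exists_isInducedOn_fixedVectors_inter hψφ hφ hψ (fun p => congrArg ψ (congrFun h p))
    (fun p hp => hp) _ (by rw [hF])

theorem exists_linearEquiv_map_eq_of_quasiLinear [FiniteDimensional 𝕜 V] {φ ψ : ℙ 𝕜 V → ℙ 𝕜 V}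
    (hφ : IsQuasiLinear φ) (hψ : IsQuasiLinear ψ) (hψφ : IsQuasiLinear (ψ ∘ φ))
    (hφψ : IsQuasiLinear (φ ∘ ψ)) (h : φ ∘ ψ ∘ φ = φ) (h' : ψ ∘ φ ∘ ψ = ψ) :
    ∃ e : V ≃ₗ[𝕜] V, ∀ p, ψ (φ p) = p → e • p = φ p := by
  obtain ⟨T, hT, hT0⟩ := exists_isInducedOn_fixedVectors hφ hψ hψφ h
  obtain ⟨S, hS, hS0⟩ := exists_isInducedOn_fixedVectors hψ hφ hφψ h'
  have hST : ∀ v ∈ fixedVectors (ψ ∘ φ), ∃ a : 𝕜, a ≠ 0 ∧ S (T v) = a • v := by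
    rintro v ⟨hv0, hv⟩
    have hTv := hT0 v ⟨hv0, hv⟩
    have hφv := hT v hv0 ⟨hv0, hv⟩ hTv
    have hTvF : T v ∈ fixedVectors (φ ∘ ψ) := ⟨hTv, by rw [← hφv]; exact congrFun h _⟩
    have hSTv := hS0 _ hTvF
    have : Projectivization.mk 𝕜 (S (T v)) hSTv = Projectivization.mk 𝕜 v hv0 := by
      rw [← hS _ hTv hTvF hSTv, ← hφv]
      exact hv
    obtain ⟨a, ha⟩ := (Projectivization.mk_eq_mk_iff 𝕜 _ _ _ _).1 this
    exact ⟨a, a.ne_zero, ha.symm⟩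
  obtain ⟨e, he⟩ := exists_linearEquiv_eqOn hST
  refine ⟨e, fun p hp => ?_⟩
  induction p using Projectivization.ind with | _ v hv0
  have hv : v ∈ fixedVectors (ψ ∘ φ) := ⟨hv0, hp⟩
  rw [hT v hv0 hv (hT0 v hv), Projectivization.smul_mk]
  congr 1
  exact he hv

end QuasiLinear

section ProjectiveSpace

open scoped LinearAlgebra.Projectivization

variable {𝕜 V : Type*} [RCLike 𝕜] [NormedAddCommGroup V] [NormedSpace 𝕜 V]

/-- The topology of a projective space as a quotient of the set of nonzero vectors. -/
instance : TopologicalSpace (ℙ 𝕜 V) :=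
  inferInstanceAs (TopologicalSpace (Quotient (projectivizationSetoid 𝕜 V)))

theorem isOpenQuotientMap_mk' :
    IsOpenQuotientMap (Projectivization.mk' 𝕜 : {v : V // v ≠ 0} → ℙ 𝕜 V) where
  surjective := Quotient.mk_surjective
  continuous := continuous_quotient_mk'
  isOpenMap U hU := by
    have hsat : Projectivization.mk' 𝕜 ⁻¹' (Projectivization.mk' 𝕜 '' U) =
        ⋃ a : 𝕜ˣ, (fun v : {v : V // v ≠ 0} =>
          (⟨a • v.1, (smul_ne_zero_iff_ne a).2 v.2⟩ : {v : V // v ≠ 0})) ⁻¹' U := by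
      ext v
      simp only [mem_preimage, mem_image, mem_iUnion, Projectivization.mk'_eq_mk,
        Projectivization.mk_eq_mk_iff]
      constructor
      · rintro ⟨w, hw, a, ha⟩
        exact ⟨a, by simpa only [ha] using hw⟩
      · rintro ⟨a, ha⟩
        exact ⟨_, ha, a, rfl⟩
    refine isOpen_coinduced.2 ?_
    change IsOpen (Projectivization.mk' 𝕜 ⁻¹' _)
    rw [hsat]
    exact isOpen_iUnion fun a => hU.preimage ((continuous_subtype_val.const_smul a).subtype_mk _)

theorem tendsto_mk {α : Type*} {l : Filter α} {w : α → V} {v : V} (h : Tendsto w l (𝓝 v))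
    (hw : ∀ a, w a ≠ 0) (hv : v ≠ 0) :
    Tendsto (fun a => Projectivization.mk 𝕜 (w a) (hw a)) l (𝓝 (Projectivization.mk 𝕜 v hv)) :=
  (isOpenQuotientMap_mk'.continuous.tendsto (⟨v, hv⟩ : {v : V // v ≠ 0})).comp
    (tendsto_subtype_rng.2 h : Tendsto (fun a => (⟨w a, hw a⟩ : {v : V // v ≠ 0})) l _)

instance : T2Space (ℙ 𝕜 V) := by
  refine (t2Space_iff_of_isOpenQuotientMap (isOpenQuotientMap_mk' (𝕜 := 𝕜))).2 ?_
  have hcont : Continuous fun q : {v : V // v ≠ 0} × {v : V // v ≠ 0} => ![q.1.1, q.2.1] := by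
    fun_prop
  convert! (isOpen_setOfPred_linearIndependent (𝕜 := 𝕜)).isClosed_compl.preimage hcont using 1
  ext ⟨⟨v, hv⟩, ⟨w, hw⟩⟩
  simp only [mem_preimage, mem_compl_iff, mem_ofPred_eq,
    ← Projectivization.independent_mk_iff_LinearIndependent hv hw,
    Projectivization.independent_pair_iff_ne, not_not, Projectivization.mk'_eq_mk]

variable [FiniteDimensional 𝕜 V]

instance : SecondCountableTopology (ℙ 𝕜 V) := by
  have : ProperSpace V := FiniteDimensional.proper_rclike 𝕜 V
  exact isOpenQuotientMap_mk'.isQuotientMap.secondCountableTopology isOpenQuotientMap_mk'.isOpenMap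

instance : CompactSpace (ℙ 𝕜 V) := by
  have : ProperSpace V := FiniteDimensional.proper_rclike 𝕜 V
  have hcont : Continuous fun v : Metric.sphere (0 : V) 1 =>
      Projectivization.mk' 𝕜 ⟨v.1, ne_zero_of_mem_unit_sphere v⟩ :=
    isOpenQuotientMap_mk'.continuous.comp (continuous_subtype_val.subtype_mk _)
  have hsurj : Function.Surjective fun v : Metric.sphere (0 : V) 1 =>
      Projectivization.mk' 𝕜 ⟨v.1, ne_zero_of_mem_unit_sphere v⟩ := fun p => by
    induction p using Projectivization.ind with | _ v hv
    refine ⟨⟨(‖v‖⁻¹ : 𝕜) • v, by simpa using norm_smul_inv_norm hv⟩, ?_⟩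
    simp only [Projectivization.mk'_eq_mk, Projectivization.mk_eq_mk_iff']
    exact ⟨_, rfl⟩
  exact hsurj.compactSpace hcont

end ProjectiveSpace

section LimitsOfProjectiveMaps

open scoped LinearAlgebra.Projectivization

variable {𝕜 : Type*} [RCLike 𝕜]

theorem exists_tendsto_smul_ne_zero {F α : Type*} [NormedAddCommGroup F] [NormedSpace 𝕜 F]
    [ProperSpace F] (U : Ultrafilter α) {w : α → F} (hw : ∀ a, w a ≠ 0) :
    ∃ c : α → 𝕜, (∀ a, c a ≠ 0) ∧ ∃ T : F, T ≠ 0 ∧ Tendsto (fun a => c a • w a) U (𝓝 T) := by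
  have hsphere : ∀ a, (‖w a‖⁻¹ : 𝕜) • w a ∈ Metric.sphere (0 : F) 1 := fun a => by
    simpa using norm_smul_inv_norm (𝕜 := 𝕜) (hw a)
  obtain ⟨T, hT, hlim⟩ := (isCompact_sphere (0 : F) 1).ultrafilter_le_nhds
    (U.map fun a => (‖w a‖⁻¹ : 𝕜) • w a) (tendsto_principal.2 (.of_forall hsphere))
  exact ⟨fun a => (‖w a‖⁻¹ : 𝕜), fun a => by simp [hw a], T,
    ne_zero_of_mem_unit_sphere ⟨T, hT⟩, hlim⟩

variable {V : Type*} [NormedAddCommGroup V] [NormedSpace 𝕜 V] [FiniteDimensional 𝕜 V]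
  {G : Type*} [Group G] [DistribMulAction G V] [SMulCommClass G 𝕜 V]

/-- The restriction to a subspace `K` of the linear action of `g`. -/
noncomputable def restrictSMul (K : Submodule 𝕜 V) (g : G) : K →L[𝕜] V :=
  ((DistribSMul.toLinearMap 𝕜 V g).domRestrict K).toContinuousLinearMap

theorem exists_tendsto_smul_restrictSMul (U : Ultrafilter G) {K : Submodule 𝕜 V} (hK : K ≠ ⊥) :
    ∃ c : G → 𝕜, (∀ g, c g ≠ 0) ∧ ∃ T : K →L[𝕜] V, T ≠ 0 ∧
      Tendsto (fun g => c g • restrictSMul K g) U (𝓝 T) := by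
  have : ProperSpace (K →L[𝕜] V) := FiniteDimensional.proper_rclike 𝕜 _
  obtain ⟨v, hv, hv0⟩ := K.ne_bot_iff.1 hK
  refine exists_tendsto_smul_ne_zero U fun g h => ?_
  exact (smul_ne_zero_iff_ne g).2 hv0 (congrArg (fun T : K →L[𝕜] V => T ⟨v, hv⟩) h)

theorem tendsto_smul_mk {l : Filter G} {K : Submodule 𝕜 V} {c : G → 𝕜} (hc : ∀ g, c g ≠ 0)
    {T : K →L[𝕜] V} (h : Tendsto (fun g => c g • restrictSMul K g) l (𝓝 T)) {v : V} (hv : v ∈ K)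
    (hTv : T ⟨v, hv⟩ ≠ 0) (hv0 : v ≠ 0) :
    Tendsto (fun g : G => g • Projectivization.mk 𝕜 v hv0) l
      (𝓝 (Projectivization.mk 𝕜 (T ⟨v, hv⟩) hTv)) := by
  have hw : ∀ g : G, c g • g • v ≠ 0 := fun g =>
    smul_ne_zero (hc g) ((smul_ne_zero_iff_ne g).2 hv0)
  have hlim : Tendsto (fun g => c g • g • v) l (𝓝 (T ⟨v, hv⟩)) :=
    ((ContinuousLinearMap.apply 𝕜 V (⟨v, hv⟩ : K)).continuous.tendsto T).comp h
  refine (tendsto_mk hlim hw hTv).congr fun g => ?_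
  rw [Projectivization.smul_mk, Projectivization.mk_eq_mk_iff']
  exact ⟨c g, rfl⟩

theorem isQuasiLinear_of_tendsto {U : Ultrafilter G} {e : ℙ 𝕜 V → ℙ 𝕜 V}
    (he : ∀ p, Tendsto (fun g : G => g • p) U (𝓝 (e p))) : IsQuasiLinear e := by
  intro K hK
  obtain ⟨c, hc, T, hT0, hT⟩ := exists_tendsto_smul_restrictSMul (G := G) U hK
  obtain ⟨T', hT'⟩ := LinearMap.exists_extend (T : K →ₗ[𝕜] V)
  have hT' (v : K) : T' v = T v := LinearMap.congr_fun hT' v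
  obtain ⟨v, hv⟩ := DFunLike.ne_iff.1 hT0
  refine ⟨T', ⟨v, v.2, by simpa [hT'] using hv⟩, fun v hv0 hvK hT'v => ?_⟩
  have hTv : T ⟨v, hvK⟩ ≠ 0 := by rwa [← hT']
  simp only [hT' ⟨v, hvK⟩]
  exact tendsto_nhds_unique (he _) (tendsto_smul_mk hc hT hvK hTv hv0)

/-- On a subspace, convergence off the kernel of the limit `T` of the rescaled maps only depends
on a countably generated filter; the kernel is handled by induction on the subspace. -/
theorem exists_isCountablyGenerated_tendsto_smul {U : Ultrafilter G} {e : ℙ 𝕜 V → ℙ 𝕜 V}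
    (he : ∀ p, Tendsto (fun g : G => g • p) U (𝓝 (e p))) :
    ∃ l : Filter G, l.IsCountablyGenerated ∧ ↑U ≤ l ∧
      ∀ p, Tendsto (fun g : G => g • p) l (𝓝 (e p)) := by
  suffices h : ∀ K : Submodule 𝕜 V, ∃ l : Filter G, l.IsCountablyGenerated ∧ ↑U ≤ l ∧
      ∀ v ∈ K, ∀ hv : v ≠ 0, Tendsto (fun g : G => g • Projectivization.mk 𝕜 v hv) l
        (𝓝 (e (Projectivization.mk 𝕜 v hv))) by
    obtain ⟨l, hl, hUl, hlim⟩ := h ⊤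
    exact ⟨l, hl, hUl, Projectivization.ind fun v hv => hlim v trivial hv⟩
  intro K
  induction K using WellFoundedLT.induction with | _ K ih
  by_cases hK : K = ⊥
  · exact ⟨⊤, inferInstance, le_top, fun v hvK hv => (hv (by simpa [hK] using hvK)).elim⟩
  obtain ⟨c, hc, T, hT0, hT⟩ := exists_tendsto_smul_restrictSMul (G := G) U hK
  have hker : T.ker.map K.subtype < K := by
    refine (Submodule.map_subtype_le K _).lt_of_ne fun h => hT0 ?_
    have htop : T.ker = ⊤ := Submodule.map_injective_of_injective K.injective_subtype
      (h.trans K.map_subtype_top.symm)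
    exact ContinuousLinearMap.coe_injective (LinearMap.ker_eq_top.1 htop)
  obtain ⟨l, hl, hUl, hlim⟩ := ih _ hker
  refine ⟨l ⊓ comap (fun g => c g • restrictSMul K g) (𝓝 T), inferInstance,
    le_inf hUl hT.le_comap, fun v hvK hv => ?_⟩
  by_cases hTv : T ⟨v, hvK⟩ = 0
  · exact (hlim v ⟨⟨v, hvK⟩, hTv, rfl⟩ hv).mono_left inf_le_left
  · have hlim' := tendsto_smul_mk hc tendsto_comap hvK hTv hv
    rw [tendsto_nhds_unique (he _) (hlim'.mono_left hT.le_comap)]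
    exact hlim'.mono_left inf_le_right

end LimitsOfProjectiveMaps

section ProbabilityMeasureTopology

open scoped NNReal

theorem opensMeasurableSpace_of_isInducing_pi {Z ι α : Type*} [TopologicalSpace Z]
    [SecondCountableTopology Z] [MeasurableSpace Z] [TopologicalSpace α] [MeasurableSpace α]
    [OpensMeasurableSpace α] {F : Z → ι → α} (hF : IsInducing F)
    (hmeas : ∀ k, Measurable fun z => F z k) : OpensMeasurableSpace Z := by
  have hgen : ‹TopologicalSpace Z› = .generateFrom
      (⋃ k, {s | IsOpen[.induced (fun z => F z k) inferInstance] s}) := by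
    rw [hF.eq_induced, induced_to_pi]
    exact (generateFrom_iUnion_isOpen _).symm
  refine ⟨(borel_eq_generateFrom_of_subbasis hgen).trans_le (MeasurableSpace.generateFrom_le ?_)⟩
  simp only [mem_iUnion]
  rintro s ⟨k, hs⟩
  obtain ⟨t, ht, rfl⟩ := isOpen_induced_iff.1 hs
  exact hmeas k ht.measurableSet

variable {E : Type*} [TopologicalSpace E] [MeasurableSpace E]

theorem isInducing_lintegral [OpensMeasurableSpace E] :
    IsInducing fun (ν : ProbabilityMeasure E) (f : BoundedContinuousFunction E ℝ≥0) =>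
      ∫⁻ p, f p ∂(ν : Measure E) := by
  refine isInducing_iff_nhds.2 fun ν => le_antisymm ?_ ?_
  · refine Tendsto.le_comap (tendsto_pi_nhds.2 ?_)
    exact ProbabilityMeasure.tendsto_iff_forall_lintegral_tendsto.1 (tendsto_id (x := 𝓝 ν))
  · refine tendsto_id'.1 (ProbabilityMeasure.tendsto_iff_forall_lintegral_tendsto.2 ?_)
    exact tendsto_pi_nhds.1 tendsto_comap

variable [BorelSpace E] [CompactSpace E] [TopologicalSpace.MetrizableSpace E]

instance : SecondCountableTopology (ProbabilityMeasure E) := by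
  let _ : MetricSpace E := TopologicalSpace.metrizableSpaceMetric E
  let _ : MetricSpace (ProbabilityMeasure E) := TopologicalSpace.metrizableSpaceMetric _
  infer_instance

instance : OpensMeasurableSpace (ProbabilityMeasure E) :=
  opensMeasurableSpace_of_isInducing_pi isInducing_lintegral fun f =>
    (Measure.measurable_lintegral f.continuous.measurable.coe_nnreal_ennreal).comp
      measurable_subtype_coe

end ProbabilityMeasureTopology

section ProbabilityMeasureAction

variable {G E : Type*} [Group G] [MulAction G E] [MeasurableSpace E]

/-- A group acts on the probability measures of a `G`-space by push-forward. -/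
noncomputable instance [MeasurableConstSMul G E] : MulAction G (ProbabilityMeasure E) where
  smul g ν := ν.map (measurable_const_smul g).aemeasurable
  one_smul ν := by
    refine Subtype.ext ?_
    change Measure.map (fun p : E => (1 : G) • p) (ν : Measure E) = ν
    simp
  mul_smul g h ν := by
    refine Subtype.ext ?_
    change Measure.map (fun p : E => (g * h) • p) (ν : Measure E) =
      Measure.map (fun p : E => g • p) (Measure.map (fun p : E => h • p) ν)
    rw [Measure.map_map (measurable_const_smul g) (measurable_const_smul h)]
    simp only [mul_smul, Function.comp_def]

variable [TopologicalSpace E] [BorelSpace E]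

instance [ContinuousConstSMul G E] : ContinuousConstSMul G (ProbabilityMeasure E) where
  continuous_const_smul g := ProbabilityMeasure.continuous_map (continuous_const_smul g)

theorem tendsto_smul_probabilityMeasure [ContinuousConstSMul G E] {l : Filter G}
    [l.IsCountablyGenerated] {e : E → E} (he : Measurable e)
    (hlim : ∀ p, Tendsto (fun g : G => g • p) l (𝓝 (e p))) (ν : ProbabilityMeasure E) :
    Tendsto (fun g : G => g • ν) l (𝓝 (ν.map he.aemeasurable)) :=
  (tendstoInDistribution_of_ae_tendsto (μ' := (ν : Measure E))
    (fun g : G => (measurable_const_smul g).aemeasurable) he.aemeasurable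
    (ae_of_all _ hlim)).tendsto

theorem continuous_smul_probabilityMeasure [TopologicalSpace G] [FirstCountableTopology G]
    [ContinuousSMul G E] (ν : ProbabilityMeasure E) : Continuous fun g : G => g • ν :=
  continuous_iff_continuousAt.2 fun g =>
    tendsto_smul_probabilityMeasure (measurable_const_smul g)
      (fun _ => (continuous_id.smul continuous_const).tendsto g) ν

end ProbabilityMeasureAction

section ProjectiveOrbits

open scoped LinearAlgebra.Projectivization

variable {𝕜 V G : Type*} [RCLike 𝕜] [NormedAddCommGroup V] [NormedSpace 𝕜 V]
  [Group G] [DistribMulAction G V] [SMulCommClass G 𝕜 V]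

instance [ContinuousConstSMul G V] : ContinuousConstSMul G (ℙ 𝕜 V) where
  continuous_const_smul g := by
    refine isOpenQuotientMap_mk'.isQuotientMap.continuous_iff.2 ?_
    exact isOpenQuotientMap_mk'.continuous.comp
      ((continuous_subtype_val.const_smul g).subtype_mk fun v => (smul_ne_zero_iff_ne g).2 v.2)

instance [TopologicalSpace G] [ContinuousSMul G V] : ContinuousSMul G (ℙ 𝕜 V) where
  continuous_smul := by
    have hquot := (IsOpenQuotientMap.id (X := G)).prodMap (isOpenQuotientMap_mk' (𝕜 := 𝕜) (V := V))
    refine hquot.isQuotientMap.continuous_iff.2 ?_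
    exact isOpenQuotientMap_mk'.continuous.comp
      ((continuous_fst.smul (continuous_subtype_val.comp continuous_snd)).subtype_mk
        fun q : G × {v : V // v ≠ 0} => (smul_ne_zero_iff_ne q.1).2 q.2.2)

variable [FiniteDimensional 𝕜 V] [ContinuousConstSMul G V] [MeasurableSpace (ℙ 𝕜 V)]
  [BorelSpace (ℙ 𝕜 V)] {U : Ultrafilter G} {e : ℙ 𝕜 V → ℙ 𝕜 V}

theorem measurable_of_tendsto_smul (he : ∀ p, Tendsto (fun g : G => g • p) U (𝓝 (e p))) :
    Measurable e := by
  obtain ⟨l, hl, hUl, hlim⟩ := exists_isCountablyGenerated_tendsto_smul he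
  have : l.NeBot := U.neBot.mono hUl
  exact measurable_of_tendsto_metrizable' l (fun g => measurable_const_smul g)
    (tendsto_pi_nhds.2 hlim)

theorem map_eq_of_tendsto_smul (he : ∀ p, Tendsto (fun g : G => g • p) U (𝓝 (e p)))
    {ν ν' : ProbabilityMeasure (ℙ 𝕜 V)} (hν : Tendsto (fun g : G => g • ν) U (𝓝 ν')) :
    Measure.map e (ν : Measure (ℙ 𝕜 V)) = ν' := by
  have hmeas := measurable_of_tendsto_smul he
  obtain ⟨l, hl, hUl, hlim⟩ := exists_isCountablyGenerated_tendsto_smul he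
  rw [tendsto_nhds_unique hν ((tendsto_smul_probabilityMeasure hmeas hlim ν).mono_left hUl)]
  rfl

variable {ι : Type*} {z z' : ι → ProbabilityMeasure (ℙ 𝕜 V)}

theorem isQuasiLinear_of_mem_transporter (he : e ∈ transporter G z z') : IsQuasiLinear e := by
  obtain ⟨U, hU, -⟩ := exists_ultrafilter_of_mem_transporter he
  exact isQuasiLinear_of_tendsto hU

theorem measurable_of_mem_transporter (he : e ∈ transporter G z z') : Measurable e := by
  obtain ⟨U, hU, -⟩ := exists_ultrafilter_of_mem_transporter he
  exact measurable_of_tendsto_smul hU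

theorem map_eq_of_mem_transporter (he : e ∈ transporter G z z') (k : ι) :
    Measure.map e (z k : Measure (ℙ 𝕜 V)) = z' k := by
  obtain ⟨U, hU, hz⟩ := exists_ultrafilter_of_mem_transporter he
  exact map_eq_of_tendsto_smul hU (tendsto_pi_nhds.1 hz k)

theorem ae_eq_self_of_mem_transporter (he : e ∈ transporter G z z) (hidem : ∀ p, e (e p) = e p)
    (k : ι) : ∀ᵐ p ∂(z k : Measure (ℙ 𝕜 V)), e p = p := by
  have hmeas := measurable_of_mem_transporter he
  rw [← map_eq_of_mem_transporter he k]
  exact (ae_map_iff hmeas.aemeasurable (measurableSet_eq_fun hmeas measurable_id)).2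
    (ae_of_all _ hidem)

/-- Orbits in each other's closure agree: two limits of projective maps that are mutually inverse
on their images are, there, given by an invertible linear map. -/
theorem mem_orbit_of_mem_closure_orbit (hG : ∀ T : V ≃ₗ[𝕜] V, ∃ g : G, ∀ v, g • v = T v)
    (h : z' ∈ closure (MulAction.orbit G z)) (h' : z ∈ closure (MulAction.orbit G z')) :
    z' ∈ MulAction.orbit G z := by
  obtain ⟨φ, hφ, ψ, hψ, hφψφ, hψφψ⟩ := exists_transporter_comp_eq (E := ℙ 𝕜 V) h h'
  have hψφ := comp_mem_transporter hψ hφ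
  obtain ⟨T, hT⟩ := exists_linearEquiv_map_eq_of_quasiLinear (isQuasiLinear_of_mem_transporter hφ)
    (isQuasiLinear_of_mem_transporter hψ) (isQuasiLinear_of_mem_transporter hψφ)
    (isQuasiLinear_of_mem_transporter (comp_mem_transporter hφ hψ)) hφψφ hψφψ
  obtain ⟨g, hg⟩ := hG T
  have hgT (p : ℙ 𝕜 V) : g • p = T • p := by
    induction p using Projectivization.ind with | _ v hv
    simp only [Projectivization.smul_mk, hg, LinearEquiv.smul_def]
  refine ⟨g, funext fun k => Subtype.ext ?_⟩
  change Measure.map (g • ·) (z k : Measure (ℙ 𝕜 V)) = z' k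
  rw [← map_eq_of_mem_transporter hφ k]
  refine Measure.map_congr ?_
  filter_upwards [ae_eq_self_of_mem_transporter hψφ (fun p => congrArg ψ (congrFun hφψφ p)) k]
    with p hp
  rw [hgT, hT p hp]

theorem t0Space_orbitRel_quotient_probabilityMeasure
    (hG : ∀ T : V ≃ₗ[𝕜] V, ∃ g : G, ∀ v, g • v = T v) (ι : Type*) :
    T0Space (MulAction.orbitRel.Quotient G (ι → ProbabilityMeasure (ℙ 𝕜 V))) :=
  t0Space_orbitRel_quotient fun _ _ => mem_orbit_of_mem_closure_orbit hG

end ProjectiveOrbits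

section MeasurableSelection

variable {C K Z : Type*} [TopologicalSpace Z] [T2Space Z] [MeasurableSpace Z]
  [OpensMeasurableSpace Z]

/-- On a fibre of `h`, which is compact, select the point minimizing `r`. -/
theorem exists_measurable_rightInverse_of_injective [TopologicalSpace C] [CompactSpace C]
    [Nonempty C] [MeasurableSpace C] [BorelSpace C] {h : C → Z} (hh : Continuous h)
    {r : C → ℝ} (hr : Continuous r) (hinj : Function.Injective r) :
    ∃ s : Z → C, Measurable s ∧ ∀ z ∈ range h, h (s z) = z := by
  classical
  have hmin : ∀ z ∈ range h, ∃ c, h c = z ∧ ∀ c', h c' = z → r c ≤ r c' := fun z hz => by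
    obtain ⟨c, hc, hle⟩ := (isClosed_singleton.preimage hh).isCompact.exists_isMinOn hz
      hr.continuousOn
    exact ⟨c, hc, hle⟩
  choose m hm hmle using hmin
  let c₀ := Classical.arbitrary C
  let s : Z → C := fun z => if hz : z ∈ range h then m z hz else c₀
  have hIic (a : ℝ) : (r ∘ s) ⁻¹' Iic a = h '' (r ⁻¹' Iic a) ∪ (range h)ᶜ ∩ {_z | r c₀ ≤ a} := by
    ext z
    by_cases hz : z ∈ range h
    · have hiff : z ∈ h '' (r ⁻¹' Iic a) ↔ r (m z hz) ≤ a :=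
        ⟨fun ⟨c, hca, hc⟩ => (hmle z hz c hc).trans hca, fun hma => ⟨m z hz, hma, hm z hz⟩⟩
      have hs : s z = m z hz := dif_pos hz
      simp only [mem_preimage, Function.comp_apply, hs, mem_Iic, mem_union, hiff, mem_inter_iff,
        mem_compl_iff, not_not_intro hz, false_and, or_false]
    · have himage : z ∉ h '' (r ⁻¹' Iic a) := fun hz' => hz (image_subset_range _ _ hz')
      have hs : s z = c₀ := dif_neg hz
      simp only [mem_preimage, Function.comp_apply, hs, mem_Iic, mem_union, himage, mem_inter_iff,
        mem_compl_iff, hz, not_false_eq_true, mem_ofPred_eq, true_and, false_or]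
  refine ⟨s, (hr.isClosedEmbedding hinj).measurableEmbedding.measurable_comp_iff.1 <|
    measurable_of_Iic fun a => ?_, fun z hz => by simp only [s, dif_pos hz, hm]⟩
  rw [hIic]
  exact ((isClosed_Iic.preimage hr).isCompact.image hh).measurableSet.union
    ((isCompact_range hh).measurableSet.compl.inter (MeasurableSet.const _))

variable [TopologicalSpace K] [TopologicalSpace.MetrizableSpace K] [Nonempty K]
  [MeasurableSpace K] [BorelSpace K] {h : K → Z}

theorem exists_measurable_rightInverse_of_compactSpace [CompactSpace K] (hh : Continuous h) :
    ∃ s : Z → K, Measurable s ∧ ∀ z ∈ range h, h (s z) = z := by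
  let _ : MetricSpace K := TopologicalSpace.metrizableSpaceMetric K
  obtain ⟨c, hc, hsurj⟩ := exists_nat_bool_continuous_surjective_of_compact K
  obtain ⟨s, hs, hright⟩ := exists_measurable_rightInverse_of_injective (hh.comp hc)
    (continuous_subtype_val.comp cantorSetHomeomorphNatToBool.symm.continuous)
    (Subtype.val_injective.comp cantorSetHomeomorphNatToBool.symm.injective)
  exact ⟨c ∘ s, hc.measurable.comp hs, fun z hz => hright z (by rwa [hsurj.range_comp])⟩

theorem exists_measurable_rightInverse [SigmaCompactSpace K] (hh : Continuous h) :
    ∃ s : Z → K, Measurable s ∧ ∀ z ∈ range h, h (s z) = z := by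
  classical
  have hlocal : ∀ n, ∃ s : Z → K, Measurable s ∧ ∀ z ∈ h '' compactCovering K n, h (s z) = z := by
    intro n
    rcases (compactCovering K n).eq_empty_or_nonempty with hempty | hne
    · exact ⟨fun _ => Classical.arbitrary K, measurable_const, by simp [hempty]⟩
    have : Nonempty (compactCovering K n) := hne.to_subtype
    have : CompactSpace (compactCovering K n) :=
      isCompact_iff_compactSpace.1 (isCompact_compactCovering K n)
    obtain ⟨s, hs, hright⟩ := exists_measurable_rightInverse_of_compactSpace
      (hh.comp (continuous_subtype_val (p := (· ∈ compactCovering K n))))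
    exact ⟨fun z => s z, measurable_subtype_coe.comp hs,
      fun z hz => hright z (by rwa [range_comp, Subtype.range_coe])⟩
  choose s hs hright using hlocal
  have himage (n : ℕ) : MeasurableSet (h '' compactCovering K n) :=
    ((isCompact_compactCovering K n).image hh).measurableSet
  have hrange : range h = ⋃ n, h '' compactCovering K n := by
    rw [← image_iUnion, iUnion_compactCovering, image_univ]
  have hcover : ∀ z, ∃ n, z ∈ h '' compactCovering K n ∨ z ∉ range h := fun z => by
    by_cases hz : z ∈ range h
    · exact (mem_iUnion.1 (hrange ▸ hz)).imp fun n => Or.inl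
    · exact ⟨0, Or.inr hz⟩
  have hrange_meas : MeasurableSet (range h) := hrange ▸ MeasurableSet.iUnion himage
  exact ⟨fun z => s (Nat.find (hcover z)) z,
    Measurable.find (p := fun n z => z ∈ h '' compactCovering K n ∨ z ∉ range h) hs
      (fun n => (himage n).union hrange_meas.compl) hcover,
    fun z hz => hright _ z ((Nat.find_spec (hcover z)).resolve_right (not_not_intro hz))⟩

end MeasurableSelection

section Straightening

variable {X Y G Z : Type*} [MeasurableSpace X] [MeasurableSpace Y] {μ : Measure X} [NeZero μ]
  {p : Measure Y} {f : Y → X → X} [Group G] [TopologicalSpace G] [SigmaCompactSpace G]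
  [TopologicalSpace.MetrizableSpace G] [MeasurableSpace G] [BorelSpace G] [TopologicalSpace Z]
  [T2Space Z] [SecondCountableTopology Z] [MeasurableSpace Z] [OpensMeasurableSpace Z]
  [MulAction G Z] [ContinuousConstSMul G Z] [T0Space (MulAction.orbitRel.Quotient G Z)]

theorem exists_measurable_ae_smul_eq (hf : IsErgodicFamily μ p f)
    (hG : ∀ z : Z, Continuous fun g : G => g • z) {z : X → Z} (hz : Measurable z)
    (hinv : ∀ᵐ i ∂p, ∀ᵐ x ∂μ, z (f i x) ∈ MulAction.orbit G (z x)) :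
    ∃ z₀, ∃ s : X → G, Measurable s ∧ ∀ᵐ x ∂μ, s x • z₀ = z x := by
  obtain ⟨z₀, hz₀⟩ := exists_ae_mem_orbit hf hz hinv
  obtain ⟨s, hs, hright⟩ := exists_measurable_rightInverse (hG z₀)
  exact ⟨z₀, s ∘ z, hs.comp hz, hz₀.mono fun x => hright (z x)⟩

end Straightening

section SkewProduct

open ProbabilityTheory

variable {X E G : Type*} [MeasurableSpace X] [MeasurableSpace E] {μ : Measure X}

theorem map_prodMap_compProd_comap [SFinite μ] {κ : Kernel X E} [IsSFiniteKernel κ] {h : X → X}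
    (hh : MeasurePreserving h μ μ) :
    (μ ⊗ₘ κ.comap h hh.measurable).map (Prod.map h id) = μ ⊗ₘ κ := by
  have hmap : Measurable (Prod.map h id : X × E → X × E) := hh.measurable.prodMap measurable_id
  ext s hs
  rw [Measure.map_apply hmap hs, Measure.compProd_apply (hmap hs), Measure.compProd_apply hs,
    ← hh.lintegral_comp (Kernel.measurable_kernel_prodMk_left hs)]
  rfl

/-- The skew product on `X × E` over the base map `h` with fibre maps `g x`; the paper's `F_i` is
`skew (f i) (A i)`, and `skew id P` is the change of coordinates given by `P`. -/
def skew [SMul G E] (h : X → X) (g : X → G) (q : X × E) : X × E := (h q.1, g q.1 • q.2)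

variable [MeasurableSpace G]

theorem measurable_skew [SMul G E] [MeasurableSMul₂ G E] {h : X → X} {g : X → G}
    (hh : Measurable h) (hg : Measurable g) : Measurable (skew h g : X × E → X × E) :=
  (hh.comp measurable_fst).prodMk ((hg.comp measurable_fst).smul measurable_snd)

/-- The push-forward of a kernel by fibre maps: `smulKernel g κ x = (g x)_* (κ x)`. -/
noncomputable def smulKernel [SMul G E] (g : X → G) (κ : Kernel X E) : Kernel X E :=
  (Kernel.id ×ₖ κ).map fun q => g q.1 • q.2

variable [SMul G E] [MeasurableSMul₂ G E] {g : X → G} {κ : Kernel X E}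

theorem smulKernel_apply [IsSFiniteKernel κ] (hg : Measurable g) (x : X) :
    smulKernel g κ x = (κ x).map (g x • ·) := by
  have hsmul : Measurable fun q : X × E => g q.1 • q.2 :=
    (hg.comp measurable_fst).smul measurable_snd
  rw [smulKernel, Kernel.map_apply _ hsmul, Kernel.prod_apply, Kernel.id_apply, Measure.dirac_prod,
    Measure.map_map hsmul measurable_prodMk_left]
  rfl

theorem isMarkovKernel_smulKernel [IsMarkovKernel κ] (hg : Measurable g) :
    IsMarkovKernel (smulKernel g κ) :=
  Kernel.IsMarkovKernel.map _ ((hg.comp measurable_fst).smul measurable_snd)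

theorem map_skew_compProd [SFinite μ] [IsMarkovKernel κ] {h : X → X} (hh : Measurable h)
    (hg : Measurable g) :
    (μ ⊗ₘ κ).map (skew h g) = (μ ⊗ₘ smulKernel g κ).map (Prod.map h id) := by
  have : IsMarkovKernel (smulKernel g κ) := isMarkovKernel_smulKernel hg
  have hmap : Measurable (Prod.map h id : X × E → X × E) := hh.prodMap measurable_id
  ext s hs
  rw [Measure.map_apply (measurable_skew hh hg) hs, Measure.map_apply hmap hs,
    Measure.compProd_apply (measurable_skew hh hg hs), Measure.compProd_apply (hmap hs)]
  refine lintegral_congr fun x => ?_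
  rw [smulKernel_apply hg, Measure.map_apply (measurable_const_smul _)
    (measurable_prodMk_left (hmap hs))]
  rfl

theorem ae_map_eq_of_map_skew_eq [StandardBorelSpace X] [StandardBorelSpace E] [IsFiniteMeasure μ]
    [IsMarkovKernel κ] {h : X → X} (hinj : Function.Injective h) (hh : MeasurePreserving h μ μ)
    (hg : Measurable g) (hinv : (μ ⊗ₘ κ).map (skew h g) = μ ⊗ₘ κ) :
    ∀ᵐ x ∂μ, (κ x).map (g x • ·) = κ (h x) := by
  have : IsMarkovKernel (smulKernel g κ) := isMarkovKernel_smulKernel hg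
  have hmap : MeasurableEmbedding (Prod.map h id : X × E → X × E) :=
    (hh.measurable.prodMap measurable_id).measurableEmbedding
      (hinj.prodMap Function.injective_id)
  have heq : μ ⊗ₘ smulKernel g κ = μ ⊗ₘ κ.comap h hh.measurable := by
    rw [← hmap.comap_map (μ ⊗ₘ smulKernel g κ), ← map_skew_compProd hh.measurable hg, hinv,
      ← map_prodMap_compProd_comap hh, hmap.comap_map]
  filter_upwards [Kernel.ae_eq_of_compProd_eq heq] with x hx
  rw [← smulKernel_apply hg, hx, Kernel.comap_apply]

theorem compProd_eq_map_skew_prod [SFinite μ] [IsMarkovKernel κ] (hg : Measurable g)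
    {ν : Measure E} [IsProbabilityMeasure ν] (hκ : ∀ᵐ x ∂μ, ν.map (g x • ·) = κ x) :
    μ ⊗ₘ κ = (μ.prod ν).map (skew id g) := by
  have : IsMarkovKernel (smulKernel g (Kernel.const X ν)) := isMarkovKernel_smulKernel hg
  rw [← Measure.compProd_const, map_skew_compProd measurable_id hg, Prod.map_id, Measure.map_id]
  refine Measure.compProd_congr ?_
  filter_upwards [hκ] with x hx
  rw [smulKernel_apply hg, Kernel.const_apply, hx]

theorem exists_compProd_eq [StandardBorelSpace E] (m : Measure (X × E)) [IsProbabilityMeasure m] :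
    ∃ κ : Kernel X E, IsMarkovKernel κ ∧ m.map Prod.fst ⊗ₘ κ = m := by
  have : Nonempty E := ⟨m.nonempty_of_neZero.some.2⟩
  exact ⟨m.condKernel, inferInstance, m.disintegrate m.condKernel⟩

end SkewProduct

section TestFunctions

theorem exists_countable_forall_eq_of_equicontinuous {α L M : Type*} [TopologicalSpace L]
    [TopologicalSpace.SeparableSpace L] [UniformSpace M] [SecondCountableTopology M] [T2Space M]
    {J : α → L → M} (hJ : Equicontinuous J) :
    ∃ D : Set α, D.Countable ∧ ∀ ψ y, (∀ b ∈ D, J b ψ = y) → ∀ a, J a ψ = y := by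
  rcases isEmpty_or_nonempty L with hL | hL
  · exact ⟨∅, countable_empty, fun ψ => isEmptyElim ψ⟩
  let e : α → ℕ → M := fun a n => J a (TopologicalSpace.denseSeq L n)
  let _ : TopologicalSpace α := .induced e inferInstance
  have : SecondCountableTopology α := TopologicalSpace.secondCountableTopology_induced _ _ _
  have hcont (ψ : L) : Continuous fun a => J a ψ := by
    refine continuous_of_uniform_approx_of_continuous fun u hu => ?_
    obtain ⟨n, hn⟩ := (TopologicalSpace.denseRange_denseSeq L).exists_mem_open isOpen_interior
      ⟨ψ, mem_interior_iff_mem_nhds.2 (hJ ψ u hu)⟩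
    exact ⟨fun a => e a n, continuous_pi_iff.1 continuous_induced_dom n, interior_subset hn⟩
  obtain ⟨D, hDc, hDd⟩ := TopologicalSpace.exists_countable_dense α
  exact ⟨D, hDc, fun ψ y h => congrFun ((hcont ψ).ext_on hDd continuous_const h)⟩

variable {X E : Type*} [MeasurableSpace X] [TopologicalSpace E] [CompactSpace E]
  [MeasurableSpace E] {μ : Measure X} {m : Measure (X × E)} {ψ : X → C(E, ℝ)}

/-- `D` determines `S` when every integrable family of test functions `ψ x ∈ C(E)` annihilated by
`D` is annihilated by `S`, i.e. `S` lies in the weak-* closed span of `D` in the dual of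
`L¹(μ; C(E))`. -/
def Determines (μ : Measure X) (D S : Set (Measure (X × E))) : Prop :=
  ∀ ψ : X → C(E, ℝ), Integrable ψ μ → (∀ b ∈ D, ∫ q, ψ q.1 q.2 ∂b = 0) →
    ∀ m ∈ S, ∫ q, ψ q.1 q.2 ∂m = 0

theorem abs_integral_eval_le (hm : m.map Prod.fst = μ) (hi : Integrable ψ μ) :
    |∫ q, ψ q.1 q.2 ∂m| ≤ ∫ x, ‖ψ x‖ ∂μ := by
  rw [← hm] at hi ⊢
  rw [integral_map measurable_fst.aemeasurable hi.aestronglyMeasurable.norm, ← Real.norm_eq_abs]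
  exact norm_integral_le_of_norm_le (hi.norm.comp_measurable measurable_fst)
    (ae_of_all _ fun q => (ψ q.1).norm_coe_le_norm q.2)

theorem integral_eval_toL1 (hm : m.map Prod.fst = μ) (hi : Integrable ψ μ) :
    ∫ q, hi.toL1 ψ q.1 q.2 ∂m = ∫ q, ψ q.1 q.2 ∂m := by
  have hae : ∀ᵐ x ∂m.map Prod.fst, hi.toL1 ψ x = ψ x := hm.symm ▸ hi.coeFn_toL1
  refine integral_congr_ae ?_
  filter_upwards [ae_of_ae_map measurable_fst.aemeasurable hae] with q hq
  rw [hq]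

variable [BorelSpace E]

theorem integral_indicator_sub_mul [IsFiniteMeasure m] {C : Set X} (hC : MeasurableSet C) (c : ℝ)
    (φ : C(E, ℝ)) : ∫ q, (C.indicator 1 q.1 - c) * φ q.2 ∂m =
      ∫ q in Prod.fst ⁻¹' C, φ q.2 ∂m - c * ∫ q, φ q.2 ∂m := by
  have hφ : Integrable (fun q : X × E => φ q.2) m :=
    .of_bound (φ.continuous.measurable.comp measurable_snd).aestronglyMeasurable ‖φ‖
      (ae_of_all _ fun q => φ.norm_coe_le_norm q.2)
  have hC' : MeasurableSet (Prod.fst ⁻¹' C : Set (X × E)) := measurable_fst hC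
  rw [← integral_indicator hC', ← integral_const_mul,
    ← integral_sub (hφ.indicator hC') (hφ.const_mul c)]
  refine integral_congr_ae (ae_of_all _ fun q => ?_)
  by_cases hq : q.1 ∈ C <;> simp [hq, sub_mul]

variable [TopologicalSpace.MetrizableSpace E]

theorem stronglyMeasurable_eval (hψ : StronglyMeasurable ψ) :
    StronglyMeasurable fun q : X × E => ψ q.1 q.2 := by
  have heval : Continuous fun r : C(E, ℝ) × E => r.1 r.2 := continuous_eval
  exact heval.comp_stronglyMeasurable
    ((hψ.comp_measurable measurable_fst).prodMk measurable_snd.stronglyMeasurable)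

theorem integrable_eval (hm : m.map Prod.fst = μ) (hψ : StronglyMeasurable ψ)
    (hi : Integrable ψ μ) : Integrable (fun q : X × E => ψ q.1 q.2) m := by
  rw [← hm] at hi
  exact (hi.norm.comp_measurable measurable_fst).mono'
    (stronglyMeasurable_eval hψ).aestronglyMeasurable
    (ae_of_all _ fun q => (ψ q.1).norm_coe_le_norm q.2)

theorem lipschitzWith_integral_eval (hm : m.map Prod.fst = μ) :
    LipschitzWith 1 fun ψ : Lp C(E, ℝ) 1 μ => ∫ q, ψ q.1 q.2 ∂m := by
  refine LipschitzWith.of_dist_le_mul fun ψ ψ' => ?_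
  have hψ := L1.integrable_coeFn ψ
  have hψ' := L1.integrable_coeFn ψ'
  rw [NNReal.coe_one, one_mul, Real.dist_eq, L1.dist_eq_integral_dist,
    ← integral_sub (integrable_eval hm (Lp.stronglyMeasurable ψ) hψ)
      (integrable_eval hm (Lp.stronglyMeasurable ψ') hψ')]
  simp_rw [dist_eq_norm]
  exact abs_integral_eval_le hm (hψ.sub hψ')

theorem exists_countable_determines [MeasurableSpace.CountablyGenerated X] [IsFiniteMeasure μ]
    {S : Set (Measure (X × E))} (hS : ∀ m ∈ S, m.map Prod.fst = μ) :
    ∃ D ⊆ S, D.Countable ∧ Determines μ D S := by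
  have : Fact ((1 : ℝ≥0∞) ≠ ∞) := ⟨ENNReal.one_ne_top⟩
  obtain ⟨D, hD, hdet⟩ := exists_countable_forall_eq_of_equicontinuous
    (LipschitzWith.uniformEquicontinuous
      (fun (m : S) (ψ : Lp C(E, ℝ) 1 μ) => ∫ q, ψ q.1 q.2 ∂m.1) 1
      fun m => lipschitzWith_integral_eval (hS m.1 m.2)).equicontinuous
  refine ⟨Subtype.val '' D, by simp, hD.image _, fun ψ hψ hz m hm => ?_⟩
  have hzero (b : S) (hb : b ∈ D) : ∫ q, hψ.toL1 ψ q.1 q.2 ∂b.1 = 0 := by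
    rw [integral_eval_toL1 (hS b.1 b.2) hψ]
    exact hz b.1 (mem_image_of_mem _ hb)
  rw [← integral_eval_toL1 (hS m hm) hψ]
  exact hdet (hψ.toL1 ψ) 0 hzero ⟨m, hm⟩

theorem eq_prod_of_setIntegral_eq [IsFiniteMeasure μ] [IsProbabilityMeasure m]
    (h : ∀ C, MeasurableSet C → ∀ φ : C(E, ℝ),
      ∫ q in Prod.fst ⁻¹' C, φ q.2 ∂m = μ.real C * ∫ q, φ q.2 ∂m) :
    m = μ.prod (m.map Prod.snd) := by
  have : IsProbabilityMeasure (m.map Prod.snd) :=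
    Measure.isProbabilityMeasure_map measurable_snd.aemeasurable
  refine (Measure.prod_eq fun C T hC hT => ?_).symm
  have : IsFiniteMeasure (μ C • m.map Prod.snd) := Measure.smul_finite _ (measure_ne_top _ _)
  have hslice : (m.restrict (Prod.fst ⁻¹' C)).map Prod.snd = μ C • m.map Prod.snd := by
    refine ext_of_forall_integral_eq_of_IsFiniteMeasure fun φ => ?_
    have hφ := φ.continuous.measurable.stronglyMeasurable
    rw [integral_map measurable_snd.aemeasurable hφ.aestronglyMeasurable, integral_smul_measure,
      integral_map measurable_snd.aemeasurable hφ.aestronglyMeasurable]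
    exact h C hC φ.toContinuousMap
  rw [Set.prod_eq, inter_comm, ← Measure.restrict_apply (measurable_snd hT),
    ← Measure.map_apply measurable_snd hT, hslice, Measure.smul_apply, smul_eq_mul]

theorem integral_indicator_one_sub_measureReal [IsProbabilityMeasure μ] {C : Set X}
    (hC : MeasurableSet C) : ∫ x, (C.indicator 1 x - μ.real C) ∂μ = 0 := by
  rw [integral_sub ((integrable_const 1).indicator hC) (integrable_const _),
    integral_indicator_one hC, integral_const, probReal_univ, one_smul, sub_self]

variable {G : Type*} [Group G] [TopologicalSpace G] [IsTopologicalGroup G]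
  [SecondCountableTopology G] [MeasurableSpace G] [BorelSpace G] [MulAction G E]
  [ContinuousSMul G E] {P : X → G}

theorem exists_integral_map_skew_eq (hP : Measurable P) {h : X → ℝ} (hh : Measurable h)
    (hi : Integrable h μ) (φ : C(E, ℝ)) :
    ∃ ψ : X → C(E, ℝ), Integrable ψ μ ∧ ∀ m : Measure (X × E),
      ∫ q, ψ q.1 q.2 ∂m.map (skew id P) = ∫ q, h q.1 * φ q.2 ∂m := by
  let Φ : C(G, C(E, ℝ)) := ContinuousMap.curry
    ⟨fun q => φ (q.1⁻¹ • q.2), φ.continuous.comp (continuous_fst.inv.smul continuous_snd)⟩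
  let ψ : X → C(E, ℝ) := fun x => h x • Φ (P x)
  have hψ : StronglyMeasurable ψ := hh.stronglyMeasurable.smul
    (Φ.continuous.comp_stronglyMeasurable hP.stronglyMeasurable)
  refine ⟨ψ, (hi.norm.mul_const ‖φ‖).mono' hψ.aestronglyMeasurable (ae_of_all _ fun x => ?_),
    fun m => ?_⟩
  · rw [norm_smul]
    gcongr
    exact (ContinuousMap.norm_le _ (norm_nonneg _)).2 fun q => φ.norm_coe_le_norm _
  · rw [integral_map (measurable_skew measurable_id hP).aemeasurable
      (stronglyMeasurable_eval hψ).aestronglyMeasurable]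
    refine integral_congr_ae (ae_of_all _ fun q => ?_)
    simp [ψ, Φ, skew]

theorem eq_prod_of_determines [IsProbabilityMeasure μ] {D S : Set (Measure (X × E))}
    (hP : Measurable P) (hdet : Determines μ D S)
    (hD : ∀ b ∈ D, ∃ ν : ProbabilityMeasure E, b = (μ.prod ν).map (skew id P))
    [IsProbabilityMeasure m] (hm : m.map (skew id P) ∈ S) :
    m = μ.prod (m.map Prod.snd) := by
  refine eq_prod_of_setIntegral_eq fun C hC φ => sub_eq_zero.1 ?_
  rw [← integral_indicator_sub_mul hC]
  obtain ⟨ψ, hψ, heq⟩ := exists_integral_map_skew_eq (μ := μ) hP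
    ((measurable_one.indicator hC).sub_const (μ.real C))
    (((integrable_const 1).indicator hC).sub (integrable_const _)) φ
  rw [← heq]
  refine hdet ψ hψ (fun b hb => ?_) _ hm
  obtain ⟨ν, rfl⟩ := hD b hb
  rw [heq, integral_prod_mul (fun x => C.indicator 1 x - μ.real C),
    integral_indicator_one_sub_measureReal hC, zero_mul]

end TestFunctions

section InvariantMeasures

open ProbabilityTheory

theorem polishSpace_of_compactSpace {E : Type*} [TopologicalSpace E] [CompactSpace E]
    [TopologicalSpace.MetrizableSpace E] : PolishSpace E := by
  let _ : MetricSpace E := TopologicalSpace.metrizableSpaceMetric E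
  infer_instance

variable {X Y E G : Type*} [Group G] [MulAction G E] {f : Y → X → X} {A : Y → X → G} {P : X → G}

/-- The cocycle obtained from `A` by the change of coordinates `P`. -/
def conjCocycle (f : Y → X → X) (A : Y → X → G) (P : X → G) (i : Y) (x : X) : G :=
  (P (f i x))⁻¹ * A i x * P x

theorem skew_id_comp_skew_conjCocycle (i : Y) :
    (skew id P ∘ skew (f i) (conjCocycle f A P i) : X × E → X × E) =
      skew (f i) (A i) ∘ skew id P := by
  funext q
  simp only [skew, conjCocycle, Function.comp_apply, id_eq, smul_smul, mul_assoc,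
    mul_inv_cancel_left]

variable [MeasurableSpace X] [MeasurableSpace Y] [MeasurableSpace E] {μ : Measure X} {p : Measure Y}

/-- The invariant probability measures with marginal `μ` of the random cocycle `A` over `f`, for a
cocycle with values in any group acting on the fibre `E`. -/
def invariantMeasures (μ : Measure X) (p : Measure Y) (f : Y → X → X) (A : Y → X → G) :
    Set (Measure (X × E)) :=
  {m | IsProbabilityMeasure m ∧ m.map Prod.fst = μ ∧ ∀ᵐ i ∂p, m.map (skew (f i) (A i)) = m}

section Measurable

variable [MeasurableSpace G] [MeasurableMul₂ G] [MeasurableInv G] [MeasurableSMul₂ G E]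

theorem map_skew_mem_invariantMeasures (hf : ∀ᵐ i ∂p, Measurable (f i))
    (hA : ∀ᵐ i ∂p, Measurable (A i)) (hP : Measurable P) {m : Measure (X × E)}
    (hm : m ∈ invariantMeasures μ p f (conjCocycle f A P)) :
    m.map (skew id P) ∈ invariantMeasures μ p f A := by
  obtain ⟨hprob, hfst, hinv⟩ := hm
  have hskew : Measurable (skew id P : X × E → X × E) := measurable_skew measurable_id hP
  refine ⟨Measure.isProbabilityMeasure_map hskew.aemeasurable, ?_, ?_⟩
  · rw [Measure.map_map measurable_fst hskew]
    exact hfst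
  · filter_upwards [hinv, hf, hA] with i hi hfi hAi
    have hconj : Measurable (skew (f i) (conjCocycle f A P i) : X × E → X × E) :=
      measurable_skew hfi (((hP.comp hfi).inv.mul hAi).mul hP)
    rw [Measure.map_map (measurable_skew hfi hAi) hskew, ← skew_id_comp_skew_conjCocycle,
      ← Measure.map_map hskew hconj, hi]

end Measurable

variable [TopologicalSpace G] [IsTopologicalGroup G] [SecondCountableTopology G]
  [LocallyCompactSpace G] [T2Space G] [MeasurableSpace G] [BorelSpace G] [TopologicalSpace E]
  [CompactSpace E] [TopologicalSpace.MetrizableSpace E] [BorelSpace E] [ContinuousSMul G E]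
  [StandardBorelSpace X] [IsProbabilityMeasure μ]

theorem exists_forall_eq_map_skew_prod (hf : IsErgodicFamily μ p f)
    (hfp : ∀ᵐ i ∂p, Function.Injective (f i) ∧ MeasurePreserving (f i) μ μ)
    (hA : ∀ᵐ i ∂p, Measurable (A i)) {D : Set (Measure (X × E))} (hDc : D.Countable)
    (hD : D ⊆ invariantMeasures μ p f A)
    [T0Space (MulAction.orbitRel.Quotient G (D → ProbabilityMeasure E))] :
    ∃ s : X → G, Measurable s ∧
      ∀ b ∈ D, ∃ ν : ProbabilityMeasure E, b = (μ.prod ν).map (skew id s) := by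
  have : Countable D := hDc
  have : PolishSpace E := polishSpace_of_compactSpace
  have (b : D) : IsProbabilityMeasure b.1 := (hD b.2).1
  choose κ hκ hκD using fun b : D => exists_compProd_eq b.1
  replace hκD (b : D) : μ ⊗ₘ κ b = b := (hD b.2).2.1 ▸ hκD b
  let z : X → D → ProbabilityMeasure E := fun x b => ⟨κ b x, inferInstance⟩
  have hz : Measurable z := measurable_pi_iff.2 fun b => (κ b).measurable.subtype_mk
  have hequi : ∀ᵐ i ∂p, ∀ᵐ x ∂μ, z (f i x) ∈ MulAction.orbit G (z x) := by
    filter_upwards [ae_all_iff.2 fun b : D => (hD b.2).2.2, hfp, hA] with i hi ⟨hinj, hmp⟩ hAi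
    have hker (b : D) : ∀ᵐ x ∂μ, (κ b x).map (A i x • ·) = κ b (f i x) :=
      ae_map_eq_of_map_skew_eq hinj hmp hAi (by rw [hκD, hi])
    filter_upwards [ae_all_iff.2 hker] with x hx
    exact ⟨A i x, funext fun b => Subtype.ext (hx b)⟩
  obtain ⟨z₀, s, hs, hsz⟩ := exists_measurable_ae_smul_eq hf (fun z => continuous_pi fun b =>
    continuous_smul_probabilityMeasure (z b)) hz hequi
  refine ⟨s, hs, fun b hb => ⟨z₀ ⟨b, hb⟩, ?_⟩⟩
  rw [← compProd_eq_map_skew_prod hs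
    (hsz.mono fun x hx => congrArg Subtype.val (congrFun hx ⟨b, hb⟩)), hκD]

theorem exists_forall_invariantMeasures_eq_prod (hf : IsErgodicFamily μ p f)
    (hfp : ∀ᵐ i ∂p, Function.Injective (f i) ∧ MeasurePreserving (f i) μ μ)
    (hA : ∀ᵐ i ∂p, Measurable (A i))
    [∀ D : Set (Measure (X × E)),
      T0Space (MulAction.orbitRel.Quotient G (D → ProbabilityMeasure E))] :
    ∃ s : X → G, Measurable s ∧ ∀ P : X → G, Measurable P → (∀ x (q : E), P x • q = s x • q) →
      ∀ m : Measure (X × E), m ∈ invariantMeasures μ p f (conjCocycle f A P) →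
        m = μ.prod (m.map Prod.snd) := by
  obtain ⟨D, hDS, hDc, hdet⟩ := exists_countable_determines
    (S := invariantMeasures (E := E) μ p f A) fun m hm => hm.2.1
  obtain ⟨s, hs, hsD⟩ := exists_forall_eq_map_skew_prod hf hfp hA hDc hDS
  refine ⟨s, hs, fun P hP hPs m hm => ?_⟩
  have : IsProbabilityMeasure m := hm.1
  have hskew : (skew id P : X × E → X × E) = skew id s :=
    funext fun q => Prod.ext rfl (hPs q.1 q.2)
  exact eq_prod_of_determines hP hdet (hskew ▸ hsD)
    (map_skew_mem_invariantMeasures (hfp.mono fun _ h => h.2.measurable) hA hP hm)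

end InvariantMeasures

section GeneralLinearGroup

open scoped LinearAlgebra.Projectivization

variable {n 𝕜 : Type*} [RCLike 𝕜]

instance [Countable n] : SecondCountableTopology (Matrix n n 𝕜) :=
  inferInstanceAs (SecondCountableTopology (n → n → 𝕜))

instance [Finite n] : LocallyCompactSpace (Matrix n n 𝕜) :=
  inferInstanceAs (LocallyCompactSpace (n → n → 𝕜))

instance [Countable n] : BorelSpace (Matrix n n 𝕜) :=
  inferInstanceAs (BorelSpace (n → n → 𝕜))

variable [Fintype n] [DecidableEq n]

theorem isOpenEmbedding_val_gl : IsOpenEmbedding (Units.val : GL n 𝕜 → Matrix n n 𝕜) := by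
  open scoped Matrix.Norms.Operator in
  exact Units.isOpenEmbedding_val

instance : SecondCountableTopology (GL n 𝕜) :=
  isOpenEmbedding_val_gl.isEmbedding.secondCountableTopology

instance : LocallyCompactSpace (GL n 𝕜) :=
  isOpenEmbedding_val_gl.locallyCompactSpace

instance : BorelSpace (GL n 𝕜) where
  measurable_eq := by
    rw [isOpenEmbedding_val_gl.eq_induced, borel_comap, ← BorelSpace.measurable_eq]
    rfl

theorem measurable_gl_iff {X : Type*} [MeasurableSpace X] {g : X → GL n 𝕜} :
    Measurable g ↔ Measurable fun x => (g x : Matrix n n 𝕜) :=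
  measurable_comap_iff

instance : ContinuousSMul (GL n 𝕜) (n → 𝕜) where
  continuous_smul :=
    (Units.continuous_val.comp continuous_fst).matrix_mulVec continuous_snd

theorem exists_gl_smul_eq (T : (n → 𝕜) ≃ₗ[𝕜] (n → 𝕜)) : ∃ g : GL n 𝕜, ∀ v, g • v = T v :=
  ⟨Matrix.GeneralLinearGroup.toLin.symm (LinearMap.GeneralLinearGroup.ofLinearEquiv T),
    LinearMap.toMatrix'_mulVec (T : (n → 𝕜) →ₗ[𝕜] n → 𝕜)⟩

theorem norm_det_rpow_pos (g : GL n 𝕜) (a : ℝ) : 0 < ‖(g : Matrix n n 𝕜).det‖ ^ a :=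
  Real.rpow_pos_of_pos (norm_pos_iff.2 (Matrix.isUnits_det_units g).ne_zero) a

/-- The matrix rescaled to have a determinant of modulus `1`, which does not change its action on
the projective space. For an empty index type the determinant is `1` and the exponent is `-(1 / 0)`,
that is `0`. -/
noncomputable def normalizeDet (g : GL n 𝕜) : GL n 𝕜 :=
  Units.mk0 ((‖(g : Matrix n n 𝕜).det‖ ^ (-(1 / Fintype.card n : ℝ)) : ℝ) : 𝕜)
    (RCLike.ofReal_ne_zero.2 (norm_det_rpow_pos g _).ne') • g

theorem coe_normalizeDet (g : GL n 𝕜) : (normalizeDet g : Matrix n n 𝕜) =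
    ((‖(g : Matrix n n 𝕜).det‖ ^ (-(1 / Fintype.card n : ℝ)) : ℝ) : 𝕜) • (g : Matrix n n 𝕜) := rfl

theorem norm_det_normalizeDet (g : GL n 𝕜) : ‖(normalizeDet g : Matrix n n 𝕜).det‖ = 1 := by
  rcases isEmpty_or_nonempty n with hn | hn
  · rw [Matrix.det_isEmpty, norm_one]
  have hcard : -(1 / Fintype.card n : ℝ) * Fintype.card n = -1 := by field_simp
  rw [coe_normalizeDet, Matrix.det_smul, norm_mul, norm_pow,
    RCLike.norm_of_nonneg (norm_det_rpow_pos g _).le, ← Real.rpow_natCast,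
    ← Real.rpow_mul (norm_nonneg _), hcard, Real.rpow_neg_one]
  exact inv_mul_cancel₀ (norm_ne_zero_iff.2 (Matrix.isUnits_det_units g).ne_zero)

theorem normalizeDet_smul (g : GL n 𝕜) (q : ℙ 𝕜 (n → 𝕜)) : normalizeDet g • q = g • q := by
  induction q using Projectivization.ind with | _ v hv
  rw [Projectivization.smul_mk, Projectivization.smul_mk, Projectivization.mk_eq_mk_iff']
  exact ⟨_, (Matrix.smul_mulVec _ _ _).symm⟩

theorem measurable_normalizeDet : Measurable (normalizeDet : GL n 𝕜 → GL n 𝕜) := by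
  have hval : Measurable (Units.val : GL n 𝕜 → Matrix n n 𝕜) := measurable_gl_iff.1 measurable_id
  have hdet : Measurable fun g : GL n 𝕜 => (g : Matrix n n 𝕜).det :=
    continuous_id.matrix_det.measurable.comp hval
  exact measurable_gl_iff.2
    ((RCLike.measurable_ofReal.comp (hdet.norm.pow_const _)).smul hval)

instance (d : ℕ) : BorelSpace (Proj d) := by
  have : PolishSpace {v : Fin d → ℝ // v ≠ 0} := isOpen_ne.polishSpace
  have : T0Space (Quotient (projectivizationSetoid ℝ (Fin d → ℝ))) :=
    inferInstanceAs (T0Space (Proj d))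
  have : SecondCountableTopology (Quotient (projectivizationSetoid ℝ (Fin d → ℝ))) :=
    inferInstanceAs (SecondCountableTopology (Proj d))
  exact Quotient.borelSpace (s := projectivizationSetoid ℝ (Fin d → ℝ))

end GeneralLinearGroup

end RandomCocycle

open RandomCocycle in
open scoped LinearAlgebra.Projectivization in
theorem stmt0_general {n 𝕜 : Type*} [Fintype n] [DecidableEq n] [RCLike 𝕜]
    [MeasurableSpace (ℙ 𝕜 (n → 𝕜))] [BorelSpace (ℙ 𝕜 (n → 𝕜))]
    {X : Type*} [MeasurableSpace X] [StandardBorelSpace X] {μ : Measure X} [IsProbabilityMeasure μ]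
    {Y : Type*} [MeasurableSpace Y] {p : Measure Y} {f : Y → X → X} {A : Y → X → GL n 𝕜}
    (hf : IsErgodicFamily μ p f)
    (hfp : ∀ᵐ i ∂p, Function.Injective (f i) ∧ MeasurePreserving (f i) μ μ)
    (hA : ∀ᵐ i ∂p, Measurable (A i)) :
    ∃ P : X → GL n 𝕜, Measurable P ∧ (∀ x, ‖(P x : Matrix n n 𝕜).det‖ = 1) ∧
      ∀ m : Measure (X × ℙ 𝕜 (n → 𝕜)), m ∈ invariantMeasures μ p f (conjCocycle f A P) →
        ∃ ν : Measure (ℙ 𝕜 (n → 𝕜)), IsProbabilityMeasure ν ∧ m = μ.prod ν := by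
  have (D : Set (Measure (X × ℙ 𝕜 (n → 𝕜)))) :
      T0Space (MulAction.orbitRel.Quotient (GL n 𝕜) (D → ProbabilityMeasure (ℙ 𝕜 (n → 𝕜)))) :=
    t0Space_orbitRel_quotient_probabilityMeasure exists_gl_smul_eq D
  obtain ⟨s, hs, hprod⟩ :=
    exists_forall_invariantMeasures_eq_prod (E := ℙ 𝕜 (n → 𝕜)) hf hfp hA
  refine ⟨fun x => normalizeDet (s x), measurable_normalizeDet.comp hs,
    fun x => norm_det_normalizeDet (s x), fun m hm => ⟨m.map Prod.snd, ?_, ?_⟩⟩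
  · have : IsProbabilityMeasure m := hm.1
    exact Measure.isProbabilityMeasure_map measurable_snd.aemeasurable
  · exact hprod _ (measurable_normalizeDet.comp hs) (fun x => normalizeDet_smul (s x)) m hm

/-- Every random `GL(d,ℝ)`-valued cocycle is cohomologous (via a measurable
`SL±(d)`-valued conjugacy `P`) to a random cocycle all of whose invariant probability measures
on `X × ℙ(ℝ^d)` are product measures. -/
theorem stmt0 {d : ℕ}
    {X : Type*} [MeasurableSpace X] [StandardBorelSpace X]
    (μ : Measure X) [IsProbabilityMeasure μ]
    {Y : Type*} [MeasurableSpace Y] (p : Measure Y) [IsProbabilityMeasure p]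
    (Pr : Measure (ℤ → Y)) [IsProbabilityMeasure Pr] (hPr : IsBernoulli p Pr)
    (f : Y → X → X) (A : Y → X → GL (Fin d) ℝ)
    (hf : Measurable fun q : Y × X => f q.1 q.2)
    (hfp : ∀ᵐ i ∂p, Function.Bijective (f i) ∧ MeasurePreserving (f i) μ μ)
    (hA : Measurable fun q : Y × X => ((A q.1 q.2 : Matrix (Fin d) (Fin d) ℝ)))
    (herg : Ergodic (fbar f) (Pr.prod μ))
    :
    ∃ P : X → GL (Fin d) ℝ,
      Measurable (fun x => ((P x : Matrix (Fin d) (Fin d) ℝ))) ∧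
      (∀ x, (P x : Matrix (Fin d) (Fin d) ℝ).det = 1 ∨
            (P x : Matrix (Fin d) (Fin d) ℝ).det = -1) ∧
      ∀ μhat : Measure (X × Proj d), IsProbabilityMeasure μhat →
        μhat.map Prod.fst = μ →
        (∀ᵐ i ∂p, μhat.map (fun q : X × Proj d =>
            (f i q.1, projAction ((P (f i q.1))⁻¹ * A i q.1 * P q.1) q.2)) = μhat) →
        ∃ ν : Measure (Proj d), IsProbabilityMeasure ν ∧ μhat = μ.prod ν := by
  obtain ⟨P, hP, hdet, hprod⟩ := stmt0_general
    (RandomCocycle.isErgodicFamily_of_quasiErgodic_fbar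
      (RandomCocycle.measurePreserving_eval_of_isBernoulli hPr 0) hf herg.quasiErgodic)
    (hfp.mono fun _ h => ⟨h.1.injective, h.2⟩)
    (ae_of_all p fun i => RandomCocycle.measurable_gl_iff.2
      (hA.comp (measurable_prodMk_left (x := i))))
  exact ⟨P, RandomCocycle.measurable_gl_iff.1 hP, fun x => eq_or_eq_neg_of_abs_eq (hdet x),
    fun μhat hμhat hfst hinv => hprod μhat ⟨hμhat, hfst, hinv⟩⟩
end

section
/- Let f be an ergodic invertible measure-preserving transformation of a standard Borel probability space (X,μ) and let (f,A) be an essentially unbounded cocycle with values in SL±(2,ℝ). Then there exist measurable maps E₁, E₂ : X → ℙ(ℝ²) such that every (f,A)-invariant probability measure μ̂ on X × ℙ(ℝ²) (projecting to μ and invariant under F(x,E) = (f(x), A(x)E)) has the form dμ̂ = (λ δ_{E₁(x)} + (1−λ) δ_{E₂(x)}) dμ(x) for some 0 ≤ λ ≤ 1; equivalently μ̂ = λ·(push-forward of μ under x ↦ (x,E₁(x))) + (1−λ)·(push-forward of μ under x ↦ (x,E₂(x))). -/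
open MeasureTheory Filter
open scoped ENNReal

/-- Lower asymptotic density of a set of natural numbers. -/
noncomputable def lowerDensity (D : Set ℕ) : ℝ :=
  Filter.liminf (fun n : ℕ => ((D ∩ Set.Iic n).ncard : ℝ) / n) Filter.atTop

/-- A sequence of reals converges essentially to infinity: for every `K > 0` the set
of times at which the sequence is `≤ K` has lower asymptotic density zero. -/
def ConvergesEssentiallyToInfinity (u : ℕ → ℝ) : Prop :=
  ∀ K > (0 : ℝ), lowerDensity {n | u n ≤ K} = 0

/-- The operator norm of a real `d × d` matrix acting on Euclidean space. -/
noncomputable def opNorm {d : ℕ} (M : Matrix (Fin d) (Fin d) ℝ) : ℝ :=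
  ‖LinearMap.toContinuousLinearMap (Matrix.toEuclideanLin M)‖

/-!
An invariant measure disintegrates over `μ` into a kernel `κ` that is equivariant under the
projective action. Then `κ ⊗ κ ⊗ κ` is equivariant too, and gives an invariant measure on triples
of projective points. A matrix of determinant `±1` sending one `ε`-separated triple to another has
norm bounded in terms of `ε`, so essential unboundedness makes the visits of an `ε`-separated
triple to the set of such triples a set of times of lower density zero; by the maximal ergodic
inequality the set of `ε`-separated triples is then null. Hence almost surely two of three
independent `κ x`-random points coincide, that is, `κ x` is carried by two points.

Sums of equivariant kernels are equivariant, so all of them are carried by one common family of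
pairs `{a x, b x}`. Either every equivariant kernel gives `a x` and `b x` the same mass, or one of
them distinguishes a heavier point, almost everywhere by ergodicity, and this choice is
equivariant. In both cases the mass of the first point is an invariant function of `x`, hence
constant.
-/

/-! ### Return times and lower density -/

section ReturnTimes

variable {Z : Type*} {T : Z → Z}

/-- The running maximum `max (0, S₁ g, …, S_N g)` of the Birkhoff sums of `g`, defined by
recursion along the orbit. -/
def birkhoffMax (T : Z → Z) (g : Z → ℝ) : ℕ → Z → ℝ
  | 0, _ => 0
  | n + 1, z => max 0 (g z + birkhoffMax T g n (T z))

lemma birkhoffMax_nonneg (T : Z → Z) (g : Z → ℝ) (n : ℕ) (z : Z) : 0 ≤ birkhoffMax T g n z := by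
  cases n with
  | zero => exact le_rfl
  | succ n => exact le_max_left _ _

lemma monotone_birkhoffMax (T : Z → Z) (g : Z → ℝ) : Monotone (birkhoffMax T g) := by
  refine monotone_nat_of_le_succ fun n => ?_
  induction n with
  | zero => exact birkhoffMax_nonneg T g 1
  | succ n ih => exact fun z => max_le_max le_rfl (add_le_add_right (ih (T z)) _)

lemma birkhoffSum_le_birkhoffMax (T : Z → Z) (g : Z → ℝ) (n : ℕ) (z : Z) :
    birkhoffSum T g n z ≤ birkhoffMax T g n z := by
  induction n generalizing z with
  | zero => simp [birkhoffMax]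
  | succ n ih =>
    rw [birkhoffSum_succ']
    exact (add_le_add_right (ih (T z)) _).trans (le_max_right _ _)

lemma birkhoffMax_sub_birkhoffMax_apply_le (T : Z → Z) (g : Z → ℝ) (n : ℕ) (z : Z) :
    birkhoffMax T g n z - birkhoffMax T g n (T z) ≤
      {z | 0 < birkhoffMax T g n z}.indicator g z := by
  by_cases hz : z ∈ {z | 0 < birkhoffMax T g n z}
  · rw [Set.indicator_of_mem hz]
    cases n with
    | zero => exact absurd (Set.mem_ofPred.1 hz) (lt_irrefl 0)
    | succ n =>
      have hmax : birkhoffMax T g (n + 1) z = g z + birkhoffMax T g n (T z) :=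
        max_eq_right ((lt_max_iff.1 (Set.mem_ofPred.1 hz)).resolve_left (lt_irrefl 0)).le
      linarith [monotone_birkhoffMax T g n.le_succ (T z)]
  · rw [Set.indicator_of_notMem hz]
    linarith [birkhoffMax_nonneg T g n (T z), not_lt.1 (Set.mem_ofPred.not.1 hz)]

lemma ncard_inter_Iic_le (D : Set ℕ) (n : ℕ) : (D ∩ Set.Iic n).ncard ≤ n + 1 := by
  simpa [Set.ncard_eq_toFinset_card'] using
    Set.ncard_le_ncard (t := Set.Iic n) (Set.inter_subset_right (s := D)) (Set.finite_Iic n)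

lemma ncard_inter_Iic_div_le_two (D : Set ℕ) (n : ℕ) :
    ((D ∩ Set.Iic n).ncard : ℝ) / n ≤ 2 := by
  rcases Nat.eq_zero_or_pos n with rfl | hn
  · simp
  · rw [div_le_iff₀ (by exact_mod_cast hn)]
    exact_mod_cast (ncard_inter_Iic_le D n).trans (by omega)

lemma isCoboundedUnder_ncard_inter_Iic_div (D : Set ℕ) :
    IsCoboundedUnder (· ≥ ·) atTop fun n : ℕ => ((D ∩ Set.Iic n).ncard : ℝ) / n :=
  (isBoundedUnder_of ⟨2, ncard_inter_Iic_div_le_two D⟩).isCoboundedUnder_ge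

lemma lowerDensity_nonneg (D : Set ℕ) : 0 ≤ lowerDensity D :=
  le_liminf_of_le (isCoboundedUnder_ncard_inter_Iic_div D) (.of_forall fun _ => by positivity)

lemma lowerDensity_mono {D D' : Set ℕ} (h : D ⊆ D') : lowerDensity D ≤ lowerDensity D' := by
  refine liminf_le_liminf (.of_forall fun n => ?_)
    (isBoundedUnder_of ⟨0, fun _ => by positivity⟩) (isCoboundedUnder_ncard_inter_Iic_div D')
  have hfin : (D' ∩ Set.Iic n).Finite := (Set.finite_Iic n).inter_of_right D'
  exact div_le_div_of_nonneg_right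
    (by exact_mod_cast Set.ncard_le_ncard (Set.inter_subset_inter_left _ h) hfin) n.cast_nonneg

lemma exists_ncard_inter_Iic_lt_of_lowerDensity_lt {D : Set ℕ} {ε : ℝ} (h : lowerDensity D < ε) :
    ∃ n : ℕ, ((D ∩ Set.Iic n).ncard : ℝ) < ε * n := by
  obtain ⟨n, hn, hpos⟩ := ((frequently_lt_of_liminf_lt
    (isCoboundedUnder_ncard_inter_Iic_div D) h).and_eventually (eventually_gt_atTop 0)).exists
  exact ⟨n, (div_lt_iff₀ (by exact_mod_cast hpos)).1 hn⟩

lemma birkhoffSum_indicator_one_le_ncard (T : Z → Z) (G : Set Z) (n : ℕ) (z : Z) :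
    birkhoffSum T (G.indicator (1 : Z → ℝ)) n z ≤ (({k | T^[k] z ∈ G} ∩ Set.Iic n).ncard : ℝ) := by
  classical
  have hsum : birkhoffSum T (G.indicator (1 : Z → ℝ)) n z =
      (((Finset.range n).filter fun k => T^[k] z ∈ G).card : ℝ) := by
    simp [birkhoffSum, Set.indicator_apply]
  rw [hsum, ← Set.ncard_coe_finset]
  refine Nat.cast_le.2 (Set.ncard_le_ncard (fun k hk => ?_) ((Set.finite_Iic n).inter_of_right _))
  rw [Finset.mem_coe, Finset.mem_filter, Finset.mem_range] at hk
  exact ⟨hk.2, hk.1.le⟩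

variable [MeasurableSpace Z] {η : Measure Z} {g : Z → ℝ}

lemma measurable_birkhoffMax (hT : Measurable T) (hg : Measurable g) (n : ℕ) :
    Measurable (birkhoffMax T g n) := by
  induction n with
  | zero => exact measurable_const
  | succ n ih => exact measurable_const.max (hg.add (ih.comp hT))

lemma integrable_birkhoffMax (hT : MeasurePreserving T η η) (hg : Integrable g η) (n : ℕ) :
    Integrable (birkhoffMax T g n) η := by
  induction n with
  | zero => exact integrable_zero _ _ _
  | succ n ih => exact (integrable_zero _ _ _).sup (hg.add (hT.integrable_comp_of_integrable ih))

lemma measurableSet_birkhoffMax_pos (hT : Measurable T) (hg : Measurable g) (n : ℕ) :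
    MeasurableSet {z | 0 < birkhoffMax T g n z} :=
  measurableSet_lt measurable_const (measurable_birkhoffMax hT hg n)

theorem setIntegral_birkhoffMax_pos_nonneg (hT : MeasurePreserving T η η) (hgm : Measurable g)
    (hg : Integrable g η) (n : ℕ) : 0 ≤ ∫ z in {z | 0 < birkhoffMax T g n z}, g z ∂η := by
  have hM := integrable_birkhoffMax hT hg n
  have hMT : Integrable (fun z => birkhoffMax T g n (T z)) η := hT.integrable_comp_of_integrable hM
  have hE := measurableSet_birkhoffMax_pos hT.measurable hgm n
  have hinv : ∫ z, birkhoffMax T g n (T z) ∂η = ∫ z, birkhoffMax T g n z ∂η := by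
    conv_rhs => rw [← hT.map_eq]
    exact (integral_map hT.aemeasurable
      (measurable_birkhoffMax hT.measurable hgm n).aestronglyMeasurable).symm
  calc (0 : ℝ) = ∫ z, (birkhoffMax T g n z - birkhoffMax T g n (T z)) ∂η := by
        rw [integral_sub hM hMT, hinv, sub_self]
    _ ≤ ∫ z, {z | 0 < birkhoffMax T g n z}.indicator g z ∂η :=
        integral_mono (hM.sub hMT) (hg.indicator hE) (birkhoffMax_sub_birkhoffMax_apply_le T g n)
    _ = ∫ z in {z | 0 < birkhoffMax T g n z}, g z ∂η := integral_indicator hE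

theorem integral_nonneg_of_exists_birkhoffSum_pos (hT : MeasurePreserving T η η)
    (hgm : Measurable g) (hg : Integrable g η)
    (hpos : ∀ᵐ z ∂η, ∃ n, 0 < birkhoffSum T g n z) : 0 ≤ ∫ z, g z ∂η := by
  let E : ℕ → Set Z := fun n => {z | 0 < birkhoffMax T g n z}
  have hE : Monotone E := fun m n hmn z hz => lt_of_lt_of_le hz (monotone_birkhoffMax T g hmn z)
  have hunion : ∀ᵐ z ∂η, z ∈ ⋃ n, E n := by
    filter_upwards [hpos] with z ⟨n, hn⟩
    exact Set.mem_iUnion.2 ⟨n, hn.trans_le (birkhoffSum_le_birkhoffMax T g n z)⟩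
  have hlim := tendsto_setIntegral_of_monotone
    (fun n => measurableSet_birkhoffMax_pos hT.measurable hgm n) hE hg.integrableOn
  rw [Measure.restrict_eq_self_of_ae_mem hunion] at hlim
  exact ge_of_tendsto' hlim fun n => setIntegral_birkhoffMax_pos_nonneg hT hgm hg n

lemma measureReal_le_mul_of_exists_birkhoffSum_indicator_lt [IsFiniteMeasure η]
    (hT : MeasurePreserving T η η) {G : Set Z} (hG : MeasurableSet G) {ε : ℝ}
    (h : ∀ᵐ z ∂η, ∃ n : ℕ, birkhoffSum T (G.indicator 1) n z < ε * n) :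
    η.real G ≤ ε * η.real Set.univ := by
  have hint : Integrable (G.indicator (1 : Z → ℝ)) η := (integrable_const 1).indicator hG
  have hnn : 0 ≤ ∫ z, (ε - G.indicator 1 z) ∂η := by
    refine integral_nonneg_of_exists_birkhoffSum_pos hT
      (measurable_const.sub (measurable_one.indicator hG)) ((integrable_const ε).sub hint) ?_
    filter_upwards [h] with z ⟨n, hn⟩
    refine ⟨n, ?_⟩
    simpa [birkhoffSum, Finset.sum_sub_distrib, mul_comm] using hn
  rw [integral_sub (integrable_const ε) hint, integral_const, integral_indicator_one hG] at hnn
  rw [smul_eq_mul] at hnn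
  linarith

theorem measure_eq_zero_of_lowerDensity_visits_eq_zero [IsFiniteMeasure η]
    (hT : MeasurePreserving T η η) {G : Set Z} (hG : MeasurableSet G)
    (h : ∀ᵐ z ∂η, z ∈ G → lowerDensity {n | T^[n] z ∈ G} = 0) : η G = 0 := by
  have hle : ∀ ε : ℝ, 0 < ε → η.real G ≤ ε * η.real Set.univ := fun ε hε => by
    refine measureReal_le_mul_of_exists_birkhoffSum_indicator_lt hT hG ?_
    filter_upwards [h] with z hz
    by_cases hzG : z ∈ G
    · obtain ⟨n, hn⟩ := exists_ncard_inter_Iic_lt_of_lowerDensity_lt ((hz hzG).trans_lt hε)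
      exact ⟨n, (birkhoffSum_indicator_one_le_ncard T G n z).trans_lt hn⟩
    · exact ⟨1, by simpa [hzG] using hε⟩
  have hlim : Tendsto (fun ε : ℝ => ε * η.real Set.univ) (nhdsWithin 0 (Set.Ioi 0))
      (nhds (0 * η.real Set.univ)) :=
    (tendsto_id.mul_const _).mono_left nhdsWithin_le_nhds
  rw [zero_mul] at hlim
  exact (measureReal_eq_zero_iff).1 <| measureReal_nonneg.antisymm' <|
    ge_of_tendsto hlim (eventually_mem_nhdsWithin.mono hle)

end ReturnTimes

/-! ### Projective space as a standard Borel space -/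

lemma standardBorelSpace_of_measurableEquiv {α β : Type*} [MeasurableSpace α] [MeasurableSpace β]
    [StandardBorelSpace β] (e : α ≃ᵐ β) : StandardBorelSpace α := by
  obtain ⟨σ, hb, hp⟩ := ‹StandardBorelSpace β›.polish
  refine ⟨σ.induced e, @BorelSpace.mk _ (σ.induced e) _ ?_, e.toEquiv.polishSpace_induced⟩
  have hborel := borel_comap (f := e) (t := σ)
  rw [← hb.measurable_eq, e.measurableEmbedding.comap_eq] at hborel
  exact hborel.symm

section ProjectiveSpace

variable {d : ℕ}

open Classical in
/-- The first nonzero coordinate of a vector (zero for the zero vector), used to normalise the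
representatives of projective points. -/
noncomputable def leadingCoord (v : Fin d → ℝ) : ℝ :=
  ∑ i, if ∀ j < i, v j = 0 then v i else 0

lemma leadingCoord_smul (t : ℝ) (v : Fin d → ℝ) : leadingCoord (t • v) = t * leadingCoord v := by
  rcases eq_or_ne t 0 with rfl | ht
  · simp [leadingCoord]
  · simp [leadingCoord, ht, Finset.mul_sum]

lemma leadingCoord_ne_zero {v : Fin d → ℝ} (hv : v ≠ 0) : leadingCoord v ≠ 0 := by
  classical
  obtain ⟨i, hi, hmin⟩ := wellFounded_lt.has_min {i | v i ≠ 0} (Function.ne_iff.1 hv)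
  have hfirst : ∀ j < i, v j = 0 := fun j hj => not_not.1 fun h => hmin j h hj
  have hsum : leadingCoord v = v i := by
    rw [leadingCoord, Finset.sum_eq_single i, if_pos hfirst]
    · intro k _ hk
      rcases hk.lt_or_gt with hlt | hlt
      · rw [hfirst k hlt, ite_self]
      · exact if_neg fun h => hi (h i hlt)
    · exact fun h => absurd (Finset.mem_univ i) h
  rwa [hsum]

lemma measurable_leadingCoord : Measurable (leadingCoord : (Fin d → ℝ) → ℝ) := by
  classical
  refine Finset.measurable_fun_sum _ fun i _ =>
    Measurable.ite ?_ (measurable_pi_apply i) measurable_const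
  have hset : {v : Fin d → ℝ | ∀ j < i, v j = 0} = ⋂ j, ⋂ _ : j < i, {v | v j = 0} := by
    ext v
    simp
  rw [hset]
  exact .iInter fun j => .iInter fun _ => measurable_pi_apply j (measurableSet_singleton 0)

/-- The representative of a projective point whose first nonzero coordinate is `1`: a measurable
section of the projection onto projective space. -/
noncomputable def normalizedRep : Proj d → {v : Fin d → ℝ // v ≠ 0} :=
  Projectivization.lift
    (fun v => ⟨(leadingCoord v.1)⁻¹ • v.1,
      smul_ne_zero (inv_ne_zero (leadingCoord_ne_zero v.2)) v.2⟩) <| by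
    rintro ⟨_, hu⟩ ⟨v, hv⟩ t rfl
    have ht : t ≠ 0 := (smul_ne_zero_iff.1 hu).1
    simp only [leadingCoord_smul, mul_inv, smul_smul, Subtype.mk.injEq]
    rw [mul_right_comm, inv_mul_cancel₀ ht, one_mul]

lemma normalizedRep_mk {v : Fin d → ℝ} (hv : v ≠ 0) :
    (normalizedRep (Projectivization.mk ℝ v hv) : Fin d → ℝ) = (leadingCoord v)⁻¹ • v :=
  rfl

lemma mk'_normalizedRep (p : Proj d) : Projectivization.mk' ℝ (normalizedRep p) = p := by
  induction p using Projectivization.ind with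
  | h v hv =>
    rw [Projectivization.mk'_eq_mk, Projectivization.mk_eq_mk_iff']
    exact ⟨(leadingCoord v)⁻¹, (normalizedRep_mk hv).symm⟩

lemma range_normalizedRep :
    Set.range (normalizedRep (d := d)) = {v | leadingCoord v.1 = 1} := by
  refine Set.Subset.antisymm ?_ fun v hv => ⟨Projectivization.mk' ℝ v, Subtype.ext ?_⟩
  · rintro _ ⟨p, rfl⟩
    induction p using Projectivization.ind with
    | h v hv =>
      rw [Set.mem_ofPred, normalizedRep_mk, leadingCoord_smul,
        inv_mul_cancel₀ (leadingCoord_ne_zero hv)]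
  · rw [Projectivization.mk'_eq_mk, normalizedRep_mk, Set.mem_ofPred.1 hv, inv_one, one_smul]

lemma measurable_projectivization_mk' :
    Measurable (Projectivization.mk' ℝ : {v : Fin d → ℝ // v ≠ 0} → Proj d) :=
  fun _ hs => hs

lemma measurable_normalizedRep : Measurable (normalizedRep (d := d)) := by
  have h : Measurable fun v : {v : Fin d → ℝ // v ≠ 0} => normalizedRep (.mk' ℝ v) :=
    ((measurable_leadingCoord.comp measurable_subtype_coe).inv.smul
      measurable_subtype_coe).subtype_mk
  exact fun s hs => h hs

lemma measurableEmbedding_normalizedRep : MeasurableEmbedding (normalizedRep (d := d)) := by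
  refine .of_measurable_inverse measurable_normalizedRep ?_ measurable_projectivization_mk'
    mk'_normalizedRep
  rw [range_normalizedRep]
  exact (measurable_leadingCoord.comp measurable_subtype_coe) (measurableSet_singleton 1)

instance standardBorelSpace_proj : StandardBorelSpace (Proj d) :=
  have : StandardBorelSpace {v : Fin d → ℝ // v ≠ 0} :=
    (measurableSet_singleton (0 : Fin d → ℝ)).compl.standardBorel
  have := (measurableEmbedding_normalizedRep (d := d)).measurableSet_range.standardBorel
  standardBorelSpace_of_measurableEquiv measurableEmbedding_normalizedRep.equivRange

lemma mulVec_ne_zero (B : GL (Fin d) ℝ) {v : Fin d → ℝ} (hv : v ≠ 0) :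
    (B : Matrix (Fin d) (Fin d) ℝ).mulVec v ≠ 0 :=
  (map_ne_zero_iff (Matrix.toLin' (B : Matrix (Fin d) (Fin d) ℝ)) (glInjective B)).2 hv

lemma projAction_mk (B : GL (Fin d) ℝ) {v : Fin d → ℝ} (hv : v ≠ 0) :
    projAction B (Projectivization.mk ℝ v hv) =
      Projectivization.mk ℝ ((B : Matrix (Fin d) (Fin d) ℝ).mulVec v) (mulVec_ne_zero B hv) :=
  rfl

lemma projAction_injective (B : GL (Fin d) ℝ) : Function.Injective (projAction B) :=
  Projectivization.map_injective _ (glInjective B)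

lemma projAction_one : projAction (1 : GL (Fin d) ℝ) = id := by
  ext1 p
  induction p using Projectivization.ind with
  | h v hv => simp only [projAction_mk, Units.val_one, Matrix.one_mulVec, id]

lemma projAction_mul (B C : GL (Fin d) ℝ) :
    projAction (B * C) = projAction B ∘ projAction C := by
  ext1 p
  induction p using Projectivization.ind with
  | h v hv => simp only [Function.comp_apply, projAction_mk, Units.val_mul, Matrix.mulVec_mulVec]

lemma measurable_projAction {Y : Type*} [MeasurableSpace Y] {B : Y → GL (Fin d) ℝ}
    (hB : Measurable fun y => (B y : Matrix (Fin d) (Fin d) ℝ)) :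
    Measurable fun z : Y × Proj d => projAction (B z.1) z.2 := by
  have hmk : (fun z : Y × Proj d => projAction (B z.1) z.2) = fun z =>
      Projectivization.mk' ℝ ⟨(B z.1 : Matrix (Fin d) (Fin d) ℝ).mulVec (normalizedRep z.2),
        mulVec_ne_zero (B z.1) (normalizedRep z.2).2⟩ := by
    ext1 z
    conv_lhs => rw [← mk'_normalizedRep z.2]
    rfl
  rw [hmk]
  refine measurable_projectivization_mk'.comp (measurable_pi_iff.2 fun i => ?_).subtype_mk
  simp only [Matrix.mulVec, dotProduct]
  refine Finset.measurable_fun_sum _ fun j _ => .fun_mul ?_ ?_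
  · exact (measurable_pi_apply j).comp ((measurable_pi_apply i).comp (hB.comp measurable_fst))
  · exact (measurable_pi_apply j).comp
      (measurable_subtype_coe.comp (measurable_normalizedRep.comp measurable_snd))

end ProjectiveSpace

/-! ### Angles between lines in the plane -/

section Stretch

variable {d : ℕ}

/-- The Euclidean norm of a vector given by its coordinates. -/
noncomputable def euclideanNorm (v : Fin d → ℝ) : ℝ := ‖WithLp.toLp 2 v‖

lemma euclideanNorm_pos {v : Fin d → ℝ} (hv : v ≠ 0) : 0 < euclideanNorm v :=
  norm_pos_iff.2 ((WithLp.toLp_eq_zero 2).not.2 hv)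

lemma euclideanNorm_smul (t : ℝ) (v : Fin d → ℝ) :
    euclideanNorm (t • v) = |t| * euclideanNorm v := by
  rw [euclideanNorm, WithLp.toLp_smul, norm_smul, Real.norm_eq_abs, euclideanNorm]

lemma euclideanNorm_add_le (u v : Fin d → ℝ) :
    euclideanNorm (u + v) ≤ euclideanNorm u + euclideanNorm v := by
  rw [euclideanNorm, WithLp.toLp_add]
  exact norm_add_le _ _

/-- The factor by which a matrix stretches the vectors of a line. -/
noncomputable def stretch (M : Matrix (Fin d) (Fin d) ℝ) (p : Proj d) : ℝ :=
  euclideanNorm (M.mulVec (normalizedRep p).1) / euclideanNorm (normalizedRep p).1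

lemma stretch_mk (M : Matrix (Fin d) (Fin d) ℝ) {v : Fin d → ℝ} (hv : v ≠ 0) :
    stretch M (Projectivization.mk ℝ v hv) = euclideanNorm (M.mulVec v) / euclideanNorm v := by
  have hne : |(leadingCoord v)⁻¹| ≠ 0 := abs_ne_zero.2 (inv_ne_zero (leadingCoord_ne_zero hv))
  rw [stretch, normalizedRep_mk, Matrix.mulVec_smul, euclideanNorm_smul, euclideanNorm_smul,
    mul_div_mul_left _ _ hne]

lemma stretch_nonneg (M : Matrix (Fin d) (Fin d) ℝ) (p : Proj d) : 0 ≤ stretch M p :=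
  div_nonneg (norm_nonneg _) (norm_nonneg _)

end Stretch

section PlaneGeometry

/-- The oriented area of the parallelogram spanned by two vectors of the plane. -/
def wedge (u v : Fin 2 → ℝ) : ℝ := u 0 * v 1 - u 1 * v 0

lemma wedge_smul_smul (s t : ℝ) (u v : Fin 2 → ℝ) :
    wedge (s • u) (t • v) = s * t * wedge u v := by
  simp only [wedge, Pi.smul_apply, smul_eq_mul]
  ring

lemma wedge_comm (u v : Fin 2 → ℝ) : wedge u v = -wedge v u := by
  unfold wedge
  ring

lemma wedge_mulVec (M : Matrix (Fin 2) (Fin 2) ℝ) (u v : Fin 2 → ℝ) :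
    wedge (M.mulVec u) (M.mulVec v) = M.det * wedge u v := by
  simp only [wedge, Matrix.det_fin_two, Matrix.mulVec, dotProduct, Fin.sum_univ_two]
  ring

lemma wedge_smul_eq_add (u v z : Fin 2 → ℝ) :
    wedge u v • z = wedge z v • u + wedge u z • v := by
  ext i
  fin_cases i <;> simp [wedge] <;> ring

lemma mk_eq_mk_of_wedge_eq_zero {u v : Fin 2 → ℝ} (hu : u ≠ 0) (hv : v ≠ 0)
    (h : wedge u v = 0) : Projectivization.mk ℝ u hu = Projectivization.mk ℝ v hv := by
  rw [Projectivization.mk_eq_mk_iff']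
  rw [wedge, sub_eq_zero] at h
  obtain ⟨i, hi⟩ := Function.ne_iff.1 hv
  refine ⟨u i / v i, ?_⟩
  ext j
  rw [Pi.smul_apply, smul_eq_mul, div_mul_eq_mul_div, div_eq_iff hi]
  fin_cases i <;> fin_cases j <;> simp [h]

lemma abs_wedge_le (u v : Fin 2 → ℝ) : |wedge u v| ≤ euclideanNorm u * euclideanNorm v := by
  refine abs_le_of_sq_le_sq ?_ (mul_nonneg (norm_nonneg _) (norm_nonneg _))
  rw [mul_pow, euclideanNorm, euclideanNorm, EuclideanSpace.real_norm_sq_eq,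
    EuclideanSpace.real_norm_sq_eq, Fin.sum_univ_two, Fin.sum_univ_two]
  simp only [wedge]
  linarith [sq_nonneg (u 0 * v 0 + u 1 * v 1)]

/-- The sine of the (unoriented) angle between two lines of the plane. -/
noncomputable def sinAngle (p q : Proj 2) : ℝ :=
  |wedge (normalizedRep p).1 (normalizedRep q).1| /
    (euclideanNorm (normalizedRep p).1 * euclideanNorm (normalizedRep q).1)

lemma sinAngle_mk {u v : Fin 2 → ℝ} (hu : u ≠ 0) (hv : v ≠ 0) :
    sinAngle (Projectivization.mk ℝ u hu) (Projectivization.mk ℝ v hv) =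
      |wedge u v| / (euclideanNorm u * euclideanNorm v) := by
  have hne : |(leadingCoord u)⁻¹| * |(leadingCoord v)⁻¹| ≠ 0 := by
    simp [leadingCoord_ne_zero hu, leadingCoord_ne_zero hv]
  rw [sinAngle, normalizedRep_mk, normalizedRep_mk, wedge_smul_smul, euclideanNorm_smul,
    euclideanNorm_smul, abs_mul, abs_mul, mul_mul_mul_comm, mul_div_mul_left _ _ hne]

lemma sinAngle_comm (p q : Proj 2) : sinAngle p q = sinAngle q p := by
  rw [sinAngle, wedge_comm, abs_neg, mul_comm, sinAngle]

lemma sinAngle_self (p : Proj 2) : sinAngle p p = 0 := by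
  simp [sinAngle, wedge, mul_comm]

lemma sinAngle_le_one (p q : Proj 2) : sinAngle p q ≤ 1 :=
  div_le_one_of_le₀ (abs_wedge_le _ _) (mul_nonneg (norm_nonneg _) (norm_nonneg _))

lemma sinAngle_pos {p q : Proj 2} (h : p ≠ q) : 0 < sinAngle p q := by
  induction p using Projectivization.ind with
  | h u hu =>
    induction q using Projectivization.ind with
    | h v hv =>
      rw [sinAngle_mk]
      have hw : wedge u v ≠ 0 := fun hw => h (mk_eq_mk_of_wedge_eq_zero hu hv hw)
      exact div_pos (abs_pos.2 hw) (mul_pos (euclideanNorm_pos hu) (euclideanNorm_pos hv))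

lemma measurable_sinAngle : Measurable fun z : Proj 2 × Proj 2 => sinAngle z.1 z.2 := by
  have hrep : Measurable fun p : Proj 2 => (normalizedRep p : Fin 2 → ℝ) :=
    measurable_subtype_coe.comp measurable_normalizedRep
  have hcoord (i : Fin 2) : Measurable fun p : Proj 2 => (normalizedRep p : Fin 2 → ℝ) i :=
    (measurable_pi_apply i).comp hrep
  have hnorm : Measurable fun p : Proj 2 => euclideanNorm (normalizedRep p).1 :=
    ((WithLp.measurable_toLp 2 _).comp hrep).norm
  have hwedge : Measurable fun z : Proj 2 × Proj 2 =>
      wedge (normalizedRep z.1).1 (normalizedRep z.2).1 :=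
    (((hcoord 0).comp measurable_fst).mul ((hcoord 1).comp measurable_snd)).sub
      (((hcoord 1).comp measurable_fst).mul ((hcoord 0).comp measurable_snd))
  exact hwedge.norm.div ((hnorm.comp measurable_fst).mul (hnorm.comp measurable_snd))

lemma sinAngle_projAction_mul_stretch (B : GL (Fin 2) ℝ) (p q : Proj 2) :
    sinAngle (projAction B p) (projAction B q) *
        (stretch (B : Matrix (Fin 2) (Fin 2) ℝ) p * stretch (B : Matrix (Fin 2) (Fin 2) ℝ) q) =
      |(B : Matrix (Fin 2) (Fin 2) ℝ).det| * sinAngle p q := by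
  induction p using Projectivization.ind with
  | h u hu =>
    induction q using Projectivization.ind with
    | h v hv =>
      have hu' := (euclideanNorm_pos hu).ne'
      have hv' := (euclideanNorm_pos hv).ne'
      have hBu := (euclideanNorm_pos (mulVec_ne_zero B hu)).ne'
      have hBv := (euclideanNorm_pos (mulVec_ne_zero B hv)).ne'
      simp only [projAction_mk, sinAngle_mk, stretch_mk, wedge_mulVec, abs_mul]
      field_simp

lemma euclideanNorm_mulVec_mul_abs_wedge_le (M : Matrix (Fin 2) (Fin 2) ℝ) (u v z : Fin 2 → ℝ) :
    euclideanNorm (M.mulVec z) * |wedge u v| ≤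
      (euclideanNorm v * euclideanNorm (M.mulVec u) +
        euclideanNorm u * euclideanNorm (M.mulVec v)) * euclideanNorm z :=
  calc euclideanNorm (M.mulVec z) * |wedge u v|
      = euclideanNorm (wedge z v • M.mulVec u + wedge u z • M.mulVec v) := by
        rw [mul_comm, ← euclideanNorm_smul, ← Matrix.mulVec_smul, wedge_smul_eq_add,
          Matrix.mulVec_add, Matrix.mulVec_smul, Matrix.mulVec_smul]
    _ ≤ |wedge z v| * euclideanNorm (M.mulVec u) + |wedge u z| * euclideanNorm (M.mulVec v) := by
        rw [← euclideanNorm_smul, ← euclideanNorm_smul]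
        exact euclideanNorm_add_le _ _
    _ ≤ euclideanNorm z * euclideanNorm v * euclideanNorm (M.mulVec u) +
          euclideanNorm u * euclideanNorm z * euclideanNorm (M.mulVec v) :=
        add_le_add (mul_le_mul_of_nonneg_right (abs_wedge_le z v) (norm_nonneg _))
          (mul_le_mul_of_nonneg_right (abs_wedge_le u z) (norm_nonneg _))
    _ = _ := by ring

lemma opNorm_mul_sinAngle_le (M : Matrix (Fin 2) (Fin 2) ℝ) {p q : Proj 2} (hpq : p ≠ q) :
    opNorm M * sinAngle p q ≤ stretch M p + stretch M q := by
  have hsin := sinAngle_pos hpq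
  rw [← le_div_iff₀ hsin]
  refine ContinuousLinearMap.opNorm_le_bound _
    (div_nonneg (add_nonneg (stretch_nonneg M p) (stretch_nonneg M q)) hsin.le) fun z => ?_
  rw [div_mul_eq_mul_div, le_div_iff₀ hsin]
  induction p using Projectivization.ind with
  | h u hu =>
    induction q using Projectivization.ind with
    | h v hv =>
      have hu' := euclideanNorm_pos hu
      have hv' := euclideanNorm_pos hv
      rw [sinAngle_mk, stretch_mk, stretch_mk, ← mul_div_assoc, div_le_iff₀ (mul_pos hu' hv')]
      refine (euclideanNorm_mulVec_mul_abs_wedge_le M u v z.ofLp).trans_eq ?_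
      have hz : euclideanNorm z.ofLp = ‖z‖ := rfl
      rw [hz]
      field_simp

lemma stretch_sq_le {ε : ℝ} (hε : 0 < ε) {B : GL (Fin 2) ℝ} {p q r : Proj 2}
    (hpq : ε ≤ sinAngle (projAction B p) (projAction B q))
    (hpr : ε ≤ sinAngle (projAction B p) (projAction B r)) (hqr : ε ≤ sinAngle q r) :
    ε ^ 3 * stretch (B : Matrix (Fin 2) (Fin 2) ℝ) p ^ 2 ≤
      |(B : Matrix (Fin 2) (Fin 2) ℝ).det| := by
  set a := stretch (B : Matrix (Fin 2) (Fin 2) ℝ) p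
  set b := stretch (B : Matrix (Fin 2) (Fin 2) ℝ) q
  set c := stretch (B : Matrix (Fin 2) (Fin 2) ℝ) r
  set D := |(B : Matrix (Fin 2) (Fin 2) ℝ).det|
  have ha : 0 ≤ a := stretch_nonneg _ p
  have hb : 0 ≤ b := stretch_nonneg _ q
  have hc : 0 ≤ c := stretch_nonneg _ r
  have hD : 0 < D := abs_pos.2 B.det.ne_zero
  have hab : ε * (a * b) ≤ D :=
    calc ε * (a * b) ≤ D * sinAngle p q := by
          rw [← sinAngle_projAction_mul_stretch]
          exact mul_le_mul_of_nonneg_right hpq (mul_nonneg ha hb)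
      _ ≤ D := mul_le_of_le_one_right hD.le (sinAngle_le_one p q)
  have hac : ε * (a * c) ≤ D :=
    calc ε * (a * c) ≤ D * sinAngle p r := by
          rw [← sinAngle_projAction_mul_stretch]
          exact mul_le_mul_of_nonneg_right hpr (mul_nonneg ha hc)
      _ ≤ D := mul_le_of_le_one_right hD.le (sinAngle_le_one p r)
  have hbc : D * ε ≤ b * c :=
    calc D * ε ≤ D * sinAngle q r := mul_le_mul_of_nonneg_left hqr hD.le
      _ ≤ b * c := by
          rw [← sinAngle_projAction_mul_stretch]
          exact mul_le_of_le_one_left (mul_nonneg hb hc) (sinAngle_le_one _ _)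
  refine le_of_mul_le_mul_left ?_ hD
  calc D * (ε ^ 3 * a ^ 2) = (ε * a) ^ 2 * (D * ε) := by ring
    _ ≤ (ε * a) ^ 2 * (b * c) := mul_le_mul_of_nonneg_left hbc (sq_nonneg _)
    _ = ε * (a * b) * (ε * (a * c)) := by ring
    _ ≤ D * D := mul_le_mul hab hac (by positivity) hD.le

/-- The smallest sine among the angles of a triple of lines: it is positive exactly on pairwise
distinct triples. -/
noncomputable def minSinAngle (t : Proj 2 × Proj 2 × Proj 2) : ℝ :=
  min (sinAngle t.1 t.2.1) (min (sinAngle t.1 t.2.2) (sinAngle t.2.1 t.2.2))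

lemma le_minSinAngle_iff {ε : ℝ} {t : Proj 2 × Proj 2 × Proj 2} :
    ε ≤ minSinAngle t ↔
      ε ≤ sinAngle t.1 t.2.1 ∧ ε ≤ sinAngle t.1 t.2.2 ∧ ε ≤ sinAngle t.2.1 t.2.2 := by
  rw [minSinAngle, le_min_iff, le_min_iff]

lemma minSinAngle_pos {t : Proj 2 × Proj 2 × Proj 2} (h₁ : t.1 ≠ t.2.1) (h₂ : t.1 ≠ t.2.2)
    (h₃ : t.2.1 ≠ t.2.2) : 0 < minSinAngle t :=
  lt_min (sinAngle_pos h₁) (lt_min (sinAngle_pos h₂) (sinAngle_pos h₃))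

lemma measurable_minSinAngle : Measurable minSinAngle := by
  have hsnd : Measurable fun t : Proj 2 × Proj 2 × Proj 2 => t.2 := measurable_snd
  exact (measurable_sinAngle.comp (measurable_fst.prodMk hsnd.fst)).min
    ((measurable_sinAngle.comp (measurable_fst.prodMk hsnd.snd)).min
      (measurable_sinAngle.comp hsnd))

/-- The projective action of a matrix on triples of points of the projective line. -/
noncomputable def tripleAction (B : GL (Fin 2) ℝ) :
    Proj 2 × Proj 2 × Proj 2 → Proj 2 × Proj 2 × Proj 2 :=
  Prod.map (projAction B) (Prod.map (projAction B) (projAction B))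

lemma tripleAction_one : tripleAction 1 = id := by
  rw [tripleAction, projAction_one, Prod.map_id, Prod.map_id]

lemma tripleAction_mul (B C : GL (Fin 2) ℝ) :
    tripleAction (B * C) = tripleAction B ∘ tripleAction C := by
  simp only [tripleAction, projAction_mul, Prod.map_comp_map]

lemma measurable_tripleAction {Y : Type*} [MeasurableSpace Y] {B : Y → GL (Fin 2) ℝ}
    (hB : Measurable fun y => (B y : Matrix (Fin 2) (Fin 2) ℝ)) :
    Measurable fun z : Y × Proj 2 × Proj 2 × Proj 2 => tripleAction (B z.1) z.2 := by
  have hact := measurable_projAction hB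
  have hp : Measurable fun z : Y × Proj 2 × Proj 2 × Proj 2 => z.2 := measurable_snd
  exact (hact.comp (measurable_fst.prodMk hp.fst)).prodMk
    ((hact.comp (measurable_fst.prodMk hp.snd.fst)).prodMk
      (hact.comp (measurable_fst.prodMk hp.snd.snd)))

/-- The operator norm of a planar matrix rescaled to have determinant `±1`. -/
noncomputable def normalizedNorm (B : GL (Fin 2) ℝ) : ℝ :=
  opNorm (B : Matrix (Fin 2) (Fin 2) ℝ) / √|(B : Matrix (Fin 2) (Fin 2) ℝ).det|

theorem normalizedNorm_le {ε : ℝ} (hε : 0 < ε) {B : GL (Fin 2) ℝ}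
    {t : Proj 2 × Proj 2 × Proj 2} (ht : ε ≤ minSinAngle t)
    (hBt : ε ≤ minSinAngle (tripleAction B t)) :
    normalizedNorm B ≤ 2 / (ε * √(ε ^ 3)) := by
  obtain ⟨p, q, r⟩ := t
  obtain ⟨hpq, hpr, hqr⟩ := le_minSinAngle_iff.1 ht
  obtain ⟨hBpq, hBpr, hBqr⟩ := le_minSinAngle_iff.1 hBt
  have hD : 0 < |(B : Matrix (Fin 2) (Fin 2) ℝ).det| := abs_pos.2 B.det.ne_zero
  have hne : p ≠ q := by
    rintro rfl
    exact hε.not_ge (hpq.trans_eq (sinAngle_self p))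
  have hstretch {x : ℝ} (hx : ε ^ 3 * x ^ 2 ≤ |(B : Matrix (Fin 2) (Fin 2) ℝ).det|) :
      √(ε ^ 3) * x ≤ √|(B : Matrix (Fin 2) (Fin 2) ℝ).det| := by
    refine Real.le_sqrt_of_sq_le ?_
    rwa [mul_pow, Real.sq_sqrt (by positivity)]
  have hp := hstretch (stretch_sq_le hε hBpq hBpr hqr)
  have hq := hstretch (stretch_sq_le hε (by rwa [sinAngle_comm]) hBqr hpr)
  rw [normalizedNorm, div_le_div_iff₀ (Real.sqrt_pos.2 hD) (by positivity)]
  calc opNorm (B : Matrix (Fin 2) (Fin 2) ℝ) * (ε * √(ε ^ 3))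
      = √(ε ^ 3) * (opNorm (B : Matrix (Fin 2) (Fin 2) ℝ) * ε) := by ring
    _ ≤ √(ε ^ 3) * (stretch (B : Matrix (Fin 2) (Fin 2) ℝ) p +
          stretch (B : Matrix (Fin 2) (Fin 2) ℝ) q) := by
        refine mul_le_mul_of_nonneg_left ?_ (Real.sqrt_nonneg _)
        exact (mul_le_mul_of_nonneg_left hpq (norm_nonneg _)).trans
          (opNorm_mul_sinAngle_le _ hne)
    _ ≤ 2 * √|(B : Matrix (Fin 2) (Fin 2) ℝ).det| := by linarith

end PlaneGeometry

/-! ### Equivariant kernels over a skew product -/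

section SkewProduct

variable {X P : Type*}

/-- The skew product `(x, p) ↦ (f x, g x p)` of a base transformation and fibre maps. -/
def skewProduct (f : X → X) (g : X → P → P) (z : X × P) : X × P := (f z.1, g z.1 z.2)

lemma iterate_skewProduct {G : Type*} [Monoid G] {ρ : G → P → P} (hone : ρ 1 = id)
    (hmul : ∀ B C, ρ (B * C) = ρ B ∘ ρ C) (f : X → X) (A : X → G) (n : ℕ) (z : X × P) :
    (skewProduct f fun x => ρ (A x))^[n] z = (f^[n] z.1, ρ (cocycleIter f A n z.1) z.2) := by
  induction n generalizing z with
  | zero => simp only [Function.iterate_zero, id_eq, cocycleIter, hone]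
  | succ n ih =>
    simp only [Function.iterate_succ_apply, ih, skewProduct, cocycleIter, hmul,
      Function.comp_apply]

end SkewProduct

section EquivariantKernel

open ProbabilityTheory

variable {X P Q : Type*} [MeasurableSpace X] [MeasurableSpace P] [MeasurableSpace Q]
  {μ : Measure X} {f : X → X} {g : X → P → P}

/-- A kernel is equivariant if, over almost every `x`, the fibre map `g x` carries the measure at
`x` to the measure at `f x`: these are the disintegrations of the measures invariant under the
skew product. -/
def IsEquivariantKernel (μ : Measure X) (f : X → X) (g : X → P → P) (κ : Kernel X P) : Prop :=
  ∀ᵐ x ∂μ, κ (f x) = (κ x).map (g x)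

lemma IsEquivariantKernel.add {κ η : Kernel X P} (hg : ∀ x, Measurable (g x))
    (hκ : IsEquivariantKernel μ f g κ) (hη : IsEquivariantKernel μ f g η) :
    IsEquivariantKernel μ f g (κ + η) := by
  filter_upwards [hκ, hη] with x hx hx'
  rw [add_apply, add_apply, hx, hx', Measure.map_add _ _ (hg x)]

lemma IsEquivariantKernel.prod {h : X → Q → Q} {κ : Kernel X P} {η : Kernel X Q}
    [IsSFiniteKernel κ] [IsSFiniteKernel η] (hg : ∀ x, Measurable (g x))
    (hh : ∀ x, Measurable (h x)) (hκ : IsEquivariantKernel μ f g κ)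
    (hη : IsEquivariantKernel μ f h η) :
    IsEquivariantKernel μ f (fun x => Prod.map (g x) (h x)) (κ ×ₖ η) := by
  filter_upwards [hκ, hη] with x hx hx'
  rw [Kernel.prod_apply, Kernel.prod_apply, hx, hx', Measure.map_prod_map _ _ (hg x) (hh x)]

/-- The image of a kernel under a family of fibre maps. -/
noncomputable def fiberMap (g : X → P → P) (κ : Kernel X P) : Kernel X P :=
  (Kernel.id ×ₖ κ).map (Function.uncurry g)

lemma fiberMap_apply (hg : Measurable (Function.uncurry g)) (κ : Kernel X P) [IsSFiniteKernel κ]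
    (x : X) : fiberMap g κ x = (κ x).map (g x) := by
  rw [fiberMap, Kernel.map_apply _ hg, Kernel.prod_apply, Kernel.id_apply, Measure.dirac_prod,
    Measure.map_map hg measurable_prodMk_left]
  rfl

instance (g : X → P → P) (κ : Kernel X P) [IsFiniteKernel κ] : IsFiniteKernel (fiberMap g κ) :=
  inferInstanceAs (IsFiniteKernel ((Kernel.id ×ₖ κ).map (Function.uncurry g)))

lemma measurable_skewProduct (hf : Measurable f) (hg : Measurable (Function.uncurry g)) :
    Measurable (skewProduct f g) :=
  (hf.comp measurable_fst).prodMk hg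

lemma map_skewProduct_compProd [SFinite μ] (hf : Measurable f)
    (hg : Measurable (Function.uncurry g)) (κ : Kernel X P) [IsFiniteKernel κ] :
    (μ.compProd κ).map (skewProduct f g) =
      (μ.compProd (fiberMap g κ)).map (Prod.map f id) := by
  ext s hs
  have hs' := (hf.prodMap measurable_id) hs
  have hT := measurable_skewProduct hf hg
  rw [Measure.map_apply hT hs, Measure.map_apply (hf.prodMap measurable_id) hs,
    Measure.compProd_apply (hT hs), Measure.compProd_apply hs']
  refine lintegral_congr fun x => ?_
  have hgx : Measurable (g x) := hg.comp measurable_prodMk_left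
  rw [fiberMap_apply hg, Measure.map_apply hgx (measurable_prodMk_left hs')]
  rfl

lemma map_compProd_comap [IsFiniteMeasure μ] (hf : MeasurePreserving f μ μ) (κ : Kernel X P)
    [IsFiniteKernel κ] :
    (μ.compProd (κ.comap f hf.measurable)).map (Prod.map f id) = μ.compProd κ := by
  ext s hs
  have hs' := (hf.measurable.prodMap measurable_id) hs
  rw [Measure.map_apply (hf.measurable.prodMap measurable_id) hs, Measure.compProd_apply hs',
    Measure.compProd_apply hs]
  exact hf.lintegral_comp (Kernel.measurable_kernel_prodMk_left hs)

theorem IsEquivariantKernel.measurePreserving [IsFiniteMeasure μ] {κ : Kernel X P}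
    [IsFiniteKernel κ] (hκ : IsEquivariantKernel μ f g κ) (hf : MeasurePreserving f μ μ)
    (hg : Measurable (Function.uncurry g)) :
    MeasurePreserving (skewProduct f g) (μ.compProd κ) (μ.compProd κ) := by
  refine ⟨measurable_skewProduct hf.measurable hg, ?_⟩
  have hfib : fiberMap g κ =ᵐ[μ] κ.comap f hf.measurable := by
    filter_upwards [hκ] with x hx
    rw [fiberMap_apply hg, Kernel.comap_apply, hx]
  rw [map_skewProduct_compProd hf.measurable hg, Measure.compProd_congr hfib,
    map_compProd_comap hf]

lemma isEquivariantKernel_of_map_skewProduct_eq [MeasurableSpace.CountableOrCountablyGenerated X P]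
    [IsFiniteMeasure μ] {κ : Kernel X P} [IsFiniteKernel κ] (hf : MeasurePreserving f μ μ)
    (hfe : MeasurableEmbedding f) (hg : Measurable (Function.uncurry g))
    (h : (μ.compProd κ).map (skewProduct f g) = μ.compProd κ) :
    IsEquivariantKernel μ f g κ := by
  rw [map_skewProduct_compProd hf.measurable hg, ← map_compProd_comap hf κ] at h
  have hfib : fiberMap g κ =ᵐ[μ] κ.comap f hf.measurable :=
    Kernel.ae_eq_of_compProd_eq ((hfe.prodMap .id).map_injective h)
  filter_upwards [hfib] with x hx
  rw [← fiberMap_apply hg, hx, Kernel.comap_apply]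

theorem exists_isEquivariantKernel_compProd_eq [StandardBorelSpace P] [Nonempty P]
    [IsFiniteMeasure μ] (hf : MeasurePreserving f μ μ) (hfe : MeasurableEmbedding f)
    (hg : Measurable (Function.uncurry g)) {ν : Measure (X × P)} (hfst : ν.map Prod.fst = μ)
    (hν : ν.map (skewProduct f g) = ν) :
    ∃ κ : Kernel X P, IsMarkovKernel κ ∧ IsEquivariantKernel μ f g κ ∧ μ.compProd κ = ν := by
  have : IsFiniteMeasure ν := by
    refine ⟨?_⟩
    rw [← Set.preimage_univ (f := Prod.fst), ← Measure.map_apply measurable_fst .univ, hfst]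
    exact measure_lt_top μ _
  have hdis : μ.compProd ν.condKernel = ν := hfst ▸ ν.disintegrate ν.condKernel
  refine ⟨ν.condKernel, inferInstance, ?_, hdis⟩
  exact isEquivariantKernel_of_map_skewProduct_eq hf hfe hg (by rw [hdis, hν])

end EquivariantKernel

/-! ### Essential unboundedness leaves at most two directions -/

section EssentiallyUnbounded

open ProbabilityTheory

variable {X P : Type*} [MeasurableSpace X] [MeasurableSpace P]

lemma ae_compProd_fst {μ : Measure X} [SFinite μ] {κ : Kernel X P} [IsSFiniteKernel κ]
    {p : X → Prop} (h : ∀ᵐ x ∂μ, p x) : ∀ᵐ z ∂μ.compProd κ, p z.1 := by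
  obtain ⟨s, hps, hs, hs0⟩ := exists_measurable_superset_of_null (ae_iff.1 h)
  filter_upwards [Measure.ae_compProd_of_ae_fst κ (p := fun x => x ∉ s) hs.compl
    (measure_eq_zero_iff_ae_notMem.1 hs0)] with z hz
  exact not_not.1 fun hp => hz (hps hp)

lemma exists_measure_compl_pair_eq_zero [MeasurableEq P] [Nonempty P] {ν : Measure P}
    [SFinite ν]
    (h : ∀ᵐ t ∂ν.prod (ν.prod ν), ¬(t.1 ≠ t.2.1 ∧ t.1 ≠ t.2.2 ∧ t.2.1 ≠ t.2.2)) :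
    ∃ p q, ν {p, q}ᶜ = 0 := by
  have hiter : ∀ᵐ p ∂ν, ∀ᵐ q ∂ν, ∀ᵐ r ∂ν, ¬(p ≠ q ∧ p ≠ r ∧ q ≠ r) := by
    filter_upwards [Measure.ae_ae_of_ae_prod h] with p hp
    exact Measure.ae_ae_of_ae_prod hp
  by_cases heq : ∀ᵐ p ∂ν, ∀ᵐ q ∂ν, p = q
  · rcases eq_zero_or_neZero ν with rfl | _
    · exact ⟨Classical.arbitrary P, Classical.arbitrary P, rfl⟩
    · obtain ⟨p, hp⟩ := heq.exists
      refine ⟨p, p, mem_ae_iff.1 ?_⟩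
      filter_upwards [hp] with q hq
      exact Or.inl hq.symm
  · obtain ⟨p, hp, hp'⟩ := ((not_eventually.1 heq).and_eventually hiter).exists
    obtain ⟨q, hpq, hq⟩ := ((not_eventually.1 hp).and_eventually hp').exists
    refine ⟨p, q, mem_ae_iff.1 ?_⟩
    filter_upwards [hq] with r hr
    by_contra hmem
    obtain ⟨hrp, hrq⟩ := not_or.1 hmem
    exact hr ⟨hpq, Ne.symm hrp, Ne.symm hrq⟩

variable {μ : Measure X} [IsFiniteMeasure μ] {f : X → X} {A : X → GL (Fin 2) ℝ}

lemma ae_minSinAngle_nonpos (hf : MeasurePreserving f μ μ)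
    (hA : Measurable fun x => (A x : Matrix (Fin 2) (Fin 2) ℝ))
    (hunb : ∀ᵐ x ∂μ, ConvergesEssentiallyToInfinity fun n => normalizedNorm (cocycleIter f A n x))
    {κ : Kernel X (Proj 2 × Proj 2 × Proj 2)} [IsFiniteKernel κ]
    (hκ : IsEquivariantKernel μ f (fun x => tripleAction (A x)) κ) :
    ∀ᵐ z ∂μ.compProd κ, minSinAngle z.2 ≤ 0 := by
  have hvisits : ∀ ε > 0, μ.compProd κ {z | ε ≤ minSinAngle z.2} = 0 := fun ε hε => by
    refine measure_eq_zero_of_lowerDensity_visits_eq_zero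
      (hκ.measurePreserving hf (measurable_tripleAction hA))
      (measurableSet_le measurable_const (measurable_minSinAngle.comp measurable_snd)) ?_
    filter_upwards [ae_compProd_fst hunb] with z hz hzε
    refine le_antisymm ?_ (lowerDensity_nonneg _)
    rw [← hz (2 / (ε * √(ε ^ 3))) (by positivity)]
    refine lowerDensity_mono fun n hn => normalizedNorm_le hε hzε ?_
    rwa [Set.mem_ofPred, iterate_skewProduct tripleAction_one tripleAction_mul] at hn
  have hall : ∀ᵐ z ∂μ.compProd κ, ∀ k : ℕ, minSinAngle z.2 < 1 / ((k : ℝ) + 1) := by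
    refine ae_all_iff.2 fun k => ?_
    simpa only [ae_iff, not_lt] using hvisits _ Nat.one_div_pos_of_nat
  filter_upwards [hall] with z hz
  exact ge_of_tendsto' tendsto_one_div_add_atTop_nhds_zero_nat fun k => (hz k).le

theorem ae_exists_measure_compl_pair_eq_zero (hf : MeasurePreserving f μ μ)
    (hA : Measurable fun x => (A x : Matrix (Fin 2) (Fin 2) ℝ))
    (hunb : ∀ᵐ x ∂μ, ConvergesEssentiallyToInfinity fun n => normalizedNorm (cocycleIter f A n x))
    {κ : Kernel X (Proj 2)} [IsFiniteKernel κ]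
    (hκ : IsEquivariantKernel μ f (fun x => projAction (A x)) κ) :
    ∀ᵐ x ∂μ, ∃ p q, κ x {p, q}ᶜ = 0 := by
  have hg (x : X) : Measurable (projAction (A x)) :=
    (measurable_projAction hA).comp measurable_prodMk_left
  have hκ₂ := hκ.prod hg hg hκ
  have hκ₃ := hκ.prod hg (fun x => (hg x).prodMap (hg x)) hκ₂
  have htriple := Measure.ae_ae_of_ae_compProd (ae_minSinAngle_nonpos hf hA hunb hκ₃)
  filter_upwards [htriple] with x hx
  rw [Kernel.prod_apply, Kernel.prod_apply] at hx
  refine exists_measure_compl_pair_eq_zero ?_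
  filter_upwards [hx] with t ht ⟨h₁, h₂, h₃⟩
  exact ht.not_gt (minSinAngle_pos h₁ h₂ h₃)

end EssentiallyUnbounded

/-! ### Measurable selection of atoms -/

section Atoms

variable {P : Type*} [MeasurableSpace P] {ν : Measure P}

/-- The set of points of positive mass. -/
def atoms (ν : Measure P) : Set P := {p | ν {p} ≠ 0}

lemma mem_atoms {p : P} : p ∈ atoms ν ↔ ν {p} ≠ 0 := Iff.rfl

lemma atoms_subset_of_measure_compl_eq_zero {s : Set P} (h : ν sᶜ = 0) : atoms ν ⊆ s := by
  intro p hp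
  by_contra hps
  exact hp (measure_mono_null (Set.singleton_subset_iff.2 hps) h)

lemma measure_compl_atoms_eq_zero {s : Set P} (hs : s.Countable) (h : ν sᶜ = 0) :
    ν (atoms ν)ᶜ = 0 := by
  have hlight : ν (s \ atoms ν) = 0 := by
    rw [measure_null_iff_singleton (hs.mono Set.sdiff_subset)]
    exact fun p hp => not_not.1 hp.2
  refine measure_mono_null (fun p hp => ?_) (measure_union_null h hlight)
  exact (em (p ∈ s)).symm.imp id fun hps => ⟨hps, hp⟩

lemma atoms_nonempty (hν : ν ≠ 0) (h : ν (atoms ν)ᶜ = 0) : (atoms ν).Nonempty := by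
  by_contra hempty
  rw [Set.not_nonempty_iff_eq_empty.1 hempty, Set.compl_empty, Measure.measure_univ_eq_zero] at h
  exact hν h

lemma atoms_add (ν ν' : Measure P) : atoms (ν + ν') = atoms ν ∪ atoms ν' := by
  ext p
  simp only [Set.mem_union, mem_atoms, Measure.add_apply, ne_eq, add_eq_zero, not_and_or]

lemma map_singleton_of_injective {Q : Type*} [MeasurableSpace Q] [MeasurableSingletonClass Q]
    {g : P → Q} (hg : Measurable g) (hinj : Function.Injective g) (ν : Measure P) (p : P) :
    ν.map g {g p} = ν {p} := by
  rw [Measure.map_apply hg (measurableSet_singleton _), ← Set.image_singleton,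
    Set.preimage_image_eq _ hinj]

lemma atoms_map_of_injective {Q : Type*} [MeasurableSpace Q] [MeasurableSingletonClass Q]
    {g : P → Q} (hg : Measurable g) (hinj : Function.Injective g) (ν : Measure P) :
    atoms (ν.map g) = g '' atoms ν := by
  ext q
  by_cases hq : q ∈ Set.range g
  · obtain ⟨p, rfl⟩ := hq
    rw [hinj.mem_set_image, mem_atoms, mem_atoms, map_singleton_of_injective hg hinj]
  · have hnull : ν.map g {q} = 0 := by
      rw [Measure.map_apply hg (measurableSet_singleton q),
        Set.preimage_singleton_eq_empty.2 hq, measure_empty]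
    exact iff_of_false (not_not.2 hnull) fun ⟨p, _, hp⟩ => hq ⟨p, hp⟩

lemma ae_iff_forall_mem_atoms (h : ν (atoms ν)ᶜ = 0) {φ : P → Prop} :
    (∀ᵐ p ∂ν, φ p) ↔ ∀ p ∈ atoms ν, φ p := by
  refine ⟨fun hφ => atoms_subset_of_measure_compl_eq_zero (s := {p | φ p}) hφ, fun hφ => ?_⟩
  exact measure_mono_null (Set.compl_subset_compl.2 hφ) h

lemma exists_atoms_eq_pair (hν : ν ≠ 0) {p q : P} (h : ν {p, q}ᶜ = 0) :
    ∃ p q, atoms ν = {p, q} := by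
  have hne := atoms_nonempty hν (measure_compl_atoms_eq_zero (Set.toFinite {p, q}).countable h)
  rcases hne.subset_pair_iff_eq.1 (atoms_subset_of_measure_compl_eq_zero h) with hp | hq | hpq
  · exact ⟨p, p, by rw [hp, Set.pair_eq_singleton]⟩
  · exact ⟨q, q, by rw [hq, Set.pair_eq_singleton]⟩
  · exact ⟨p, q, hpq⟩

lemma eq_smul_dirac_add_smul_dirac [MeasurableSingletonClass P] [IsProbabilityMeasure ν]
    {p q : P} (h : ν {p, q}ᶜ = 0) :
    ν = ν {p} • Measure.dirac p + (1 - ν {p}) • Measure.dirac q := by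
  have hq : ∀ᵐ r ∂ν.restrict {p}ᶜ, id r = q := by
    rw [ae_restrict_iff' (measurableSet_singleton p).compl]
    filter_upwards [mem_ae_iff.2 h] with r hr hrp
    exact (hr.resolve_left hrp)
  have hdirac : ν.restrict {p}ᶜ = (1 - ν {p}) • Measure.dirac q := by
    rw [← Measure.map_id (μ := ν.restrict {p}ᶜ), Measure.map_congr hq, Measure.map_const,
      Measure.restrict_apply_univ, prob_compl_eq_one_sub (measurableSet_singleton p)]
  rw [← hdirac, ← Measure.restrict_singleton,
    Measure.restrict_add_restrict_compl (measurableSet_singleton p)]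

end Atoms

section EssentialInfimum

open ProbabilityTheory

variable {X P β : Type*} [MeasurableSpace X] [MeasurableSpace P] [CompleteLinearOrder β]
  [TopologicalSpace β] [OrderTopology β]

lemma le_essInf_iff [FirstCountableTopology β] {ν : Measure P} {φ : P → β} {c : β} :
    c ≤ essInf φ ν ↔ ∀ᵐ p ∂ν, c ≤ φ p :=
  ⟨fun hc => (ae_essInf_le (f := φ)).mono fun _ => hc.trans, le_essInf_of_ae_le c⟩

lemma measurable_essInf [SecondCountableTopology β] [MeasurableSpace β] [BorelSpace β]
    (κ : Kernel X P) {φ : P → β} (hφ : Measurable φ) : Measurable fun x => essInf φ (κ x) := by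
  refine measurable_of_Ici fun c => ?_
  have hset : (fun x => essInf φ (κ x)) ⁻¹' Set.Ici c = {x | κ x {p | φ p < c} = 0} := by
    ext x
    rw [Set.mem_preimage, Set.mem_Ici, le_essInf_iff, ae_iff]
    simp only [not_le, Set.mem_ofPred]
  rw [hset]
  exact κ.measurable_coe (measurableSet_lt hφ measurable_const) (measurableSet_singleton 0)

lemma essInf_eq_min [FirstCountableTopology β] {ν : Measure P} (h : ν (atoms ν)ᶜ = 0) {p q : P}
    (hpq : atoms ν = {p, q}) (φ : P → β) : essInf φ ν = min (φ p) (φ q) := by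
  refine eq_of_forall_le_iff fun c => ?_
  rw [le_essInf_iff, ae_iff_forall_mem_atoms h, hpq, le_min_iff]
  simp only [Set.mem_insert_iff, Set.mem_singleton_iff, forall_eq_or_imp, forall_eq]

end EssentialInfimum

section Selection

open ProbabilityTheory

variable {X P : Type*} [MeasurableSpace X] [MeasurableSpace P]

lemma exists_measurable_argmin_atoms [Nonempty P] (κ : Kernel X P) {φ : P → EReal}
    (hφ : MeasurableEmbedding φ) :
    ∃ a : X → P, Measurable a ∧ ∀ x p q, κ x (atoms (κ x))ᶜ = 0 → atoms (κ x) = {p, q} →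
      φ p ≤ φ q → a x = p := by
  obtain ⟨ψ, hψ, hψφ⟩ := hφ.exists_measurable_extend measurable_id fun _ => inferInstance
  refine ⟨fun x => ψ (essInf φ (κ x)), hψ.comp (measurable_essInf κ hφ.measurable), ?_⟩
  intro x p q h hpq hle
  change ψ (essInf φ (κ x)) = p
  rw [essInf_eq_min h hpq, min_eq_left hle]
  exact congrFun hψφ p

theorem exists_measurable_atoms [StandardBorelSpace P] [Nonempty P] (κ : Kernel X P) :
    ∃ a b : X → P, Measurable a ∧ Measurable b ∧
      ∀ x, κ x ≠ 0 → (∃ p q, κ x {p, q}ᶜ = 0) → atoms (κ x) = {a x, b x} := by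
  have hφ := measurableEmbedding_embeddingReal P
  obtain ⟨a, ha, hmin⟩ := exists_measurable_argmin_atoms κ (EReal.measurableEmbedding_coe.comp hφ)
  obtain ⟨b, hb, hmax⟩ := exists_measurable_argmin_atoms κ
    (EReal.measurableEmbedding_coe.comp ((MeasurableEquiv.neg ℝ).measurableEmbedding.comp hφ))
  refine ⟨a, b, ha, hb, fun x hx ⟨p', q', hcarried⟩ => ?_⟩
  have hnull := measure_compl_atoms_eq_zero (Set.toFinite {p', q'}).countable hcarried
  have hab : ∀ p q, atoms (κ x) = {p, q} → embeddingReal P p ≤ embeddingReal P q →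
      atoms (κ x) = {a x, b x} := fun p q hpq hle => by
    rw [hmin x p q hnull hpq (EReal.coe_le_coe_iff.2 hle),
      hmax x q p hnull (hpq.trans (Set.pair_comm p q)) (EReal.coe_le_coe_iff.2 (neg_le_neg hle)),
      hpq]
  obtain ⟨p, q, hpq⟩ := exists_atoms_eq_pair hx hcarried
  rcases le_total (embeddingReal P p) (embeddingReal P q) with hle | hle
  · exact hab p q hpq hle
  · exact hab q p (hpq.trans (Set.pair_comm p q)) hle

lemma measurable_kernel_singleton [MeasurableEq P] (κ : Kernel X P) [IsSFiniteKernel κ]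
    {a : X → P} (ha : Measurable a) : Measurable fun x => κ x {a x} := by
  have h : MeasurableSet {z : X × P | z.2 = a z.1} :=
    measurableSet_eq_fun measurable_snd (ha.comp measurable_fst)
  exact Kernel.measurable_kernel_prodMk_left h

lemma compProd_eq_smul_map_add_smul_map {μ : Measure X} [SFinite μ] {κ : Kernel X P}
    [IsSFiniteKernel κ] {a b : X → P} (ha : Measurable a) (hb : Measurable b) {c d : ℝ≥0∞}
    (h : ∀ᵐ x ∂μ, κ x = c • Measure.dirac (a x) + d • Measure.dirac (b x)) :
    μ.compProd κ = c • μ.map (fun x => (x, a x)) + d • μ.map (fun x => (x, b x)) := by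
  have hm {E : X → P} (hE : Measurable E) {s : Set (X × P)} (hs : MeasurableSet s) :
      Measurable fun x => Kernel.deterministic E hE x (Prod.mk x ⁻¹' s) :=
    Kernel.measurable_kernel_prodMk_left hs
  rw [← Measure.compProd_deterministic ha, ← Measure.compProd_deterministic hb]
  ext s hs
  calc μ.compProd κ s
      = ∫⁻ x, (c * Kernel.deterministic a ha x (Prod.mk x ⁻¹' s) +
          d * Kernel.deterministic b hb x (Prod.mk x ⁻¹' s)) ∂μ := by
        rw [Measure.compProd_apply hs]
        refine lintegral_congr_ae ?_
        filter_upwards [h] with x hx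
        rw [hx]
        rfl
    _ = (c • μ.compProd (.deterministic a ha) + d • μ.compProd (.deterministic b hb)) s := by
        rw [lintegral_add_left ((hm ha hs).const_mul c), lintegral_const_mul _ (hm ha hs),
          lintegral_const_mul _ (hm hb hs), ← Measure.compProd_apply hs,
          ← Measure.compProd_apply hs]
        rfl

end Selection

/-! ### Equivariant kernels carried by pairs of points -/

section NontrivialAtoms

variable {P : Type*} [MeasurableSpace P] {ν ν' : Measure P}

lemma ne_zero_of_nontrivial_atoms (h : (atoms ν).Nontrivial) : ν ≠ 0 := by
  rintro rfl
  obtain ⟨p, hp⟩ := h.nonempty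
  exact hp (by rw [Measure.coe_zero, Pi.zero_apply])

lemma atoms_subset_of_nontrivial_atoms {p q : P} (h : (atoms ν').Nontrivial)
    (hpq : (ν + ν') {p, q}ᶜ = 0) : atoms ν ⊆ atoms ν' := by
  have hsub := atoms_subset_of_measure_compl_eq_zero hpq
  rw [atoms_add, Set.union_subset_iff] at hsub
  have heq : atoms ν' = {p, q} := by
    rcases h.nonempty.subset_pair_iff_eq.1 hsub.2 with hp | hq | hpq
    · exact absurd (hp ▸ h) Set.not_nontrivial_singleton
    · exact absurd (hq ▸ h) Set.not_nontrivial_singleton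
    · exact hpq
  exact heq ▸ hsub.1

end NontrivialAtoms

section ErgodicPairs

open ProbabilityTheory

variable {X P : Type*} [MeasurableSpace X] [MeasurableSpace P] {μ : Measure X} {f : X → X}
  {g : X → P → P}

lemma IsEquivariantKernel.ae_apply_comp_singleton [MeasurableSingletonClass P] {κ : Kernel X P}
    (hκ : IsEquivariantKernel μ f g κ) (hg : ∀ x, Measurable (g x))
    (hinj : ∀ x, Function.Injective (g x)) :
    ∀ᵐ x ∂μ, ∀ p, κ (f x) {g x p} = κ x {p} := by
  filter_upwards [hκ] with x hx p
  rw [hx, map_singleton_of_injective (hg x) (hinj x)]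

lemma IsEquivariantKernel.ae_atoms_comp [MeasurableSingletonClass P] {κ : Kernel X P}
    (hκ : IsEquivariantKernel μ f g κ) (hg : ∀ x, Measurable (g x))
    (hinj : ∀ x, Function.Injective (g x)) :
    ∀ᵐ x ∂μ, atoms (κ (f x)) = g x '' atoms (κ x) := by
  filter_upwards [hκ] with x hx
  rw [hx, atoms_map_of_injective (hg x) (hinj x)]

section MeasurableEq

variable [MeasurableEq P]

lemma exists_ae_eq_smul_dirac_add_smul_dirac (herg : Ergodic f μ) {κ : Kernel X P}
    [IsMarkovKernel κ] {a b : X → P} (ha : Measurable a)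
    (hcarried : ∀ᵐ x ∂μ, κ x {a x, b x}ᶜ = 0)
    (hmass : ∀ᵐ x ∂μ, κ (f x) {a (f x)} = κ x {a x}) :
    ∃ c : ℝ≥0∞, c ≤ 1 ∧
      ∀ᵐ x ∂μ, κ x = c • Measure.dirac (a x) + (1 - c) • Measure.dirac (b x) := by
  obtain ⟨c, hc⟩ := herg.quasiErgodic.ae_eq_const_of_ae_eq_comp₀
    (measurable_kernel_singleton κ ha).nullMeasurable hmass
  refine ⟨min c 1, min_le_right _ _, ?_⟩
  filter_upwards [hc, hcarried] with x hx hpair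
  rw [← show κ x {a x} = c from hx, min_eq_left prob_le_one]
  exact eq_smul_dirac_add_smul_dirac hpair

lemma exists_ae_comp_eq_of_not_ae_eq_mass (herg : Ergodic f μ) {κ : Kernel X P} [IsFiniteKernel κ]
    {a b : X → P} (ha : Measurable a) (hb : Measurable b)
    (hmass : ∀ᵐ x ∂μ, ∀ p, κ (f x) {g x p} = κ x {p})
    (hpair : ∀ᵐ x ∂μ, ({a (f x), b (f x)} : Set P) = {g x (a x), g x (b x)})
    (hne : ¬ ∀ᵐ x ∂μ, κ x {a x} = κ x {b x}) :
    ∃ E₁ E₂ : X → P, Measurable E₁ ∧ Measurable E₂ ∧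
      (∀ x, ({E₁ x, E₂ x} : Set P) = {a x, b x}) ∧ ∀ᵐ x ∂μ, E₁ (f x) = g x (E₁ x) := by
  classical
  have hma := measurable_kernel_singleton κ ha
  have hmb := measurable_kernel_singleton κ hb
  have hlt : MeasurableSet {x | κ x {b x} < κ x {a x}} := measurableSet_lt hmb hma
  have hinv : f ⁻¹' {x | κ x {a x} = κ x {b x}} =ᵐ[μ] {x | κ x {a x} = κ x {b x}} := by
    refine Filter.Eventually.set_eq ?_
    filter_upwards [hmass, hpair] with x hx hab
    rw [Set.mem_preimage, Set.mem_ofPred]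
    rcases Set.pair_eq_pair_iff.1 hab with ⟨h1, h2⟩ | ⟨h1, h2⟩ <;> rw [h1, h2, hx, hx]
    exact eq_comm
  have hasymm : ∀ᵐ x ∂μ, κ x {a x} ≠ κ x {b x} :=
    (herg.quasiErgodic.ae_mem_or_ae_notMem₀ (measurableSet_eq_fun hma hmb).nullMeasurableSet
      hinv).resolve_left hne
  refine ⟨fun x => if κ x {b x} < κ x {a x} then a x else b x,
    fun x => if κ x {b x} < κ x {a x} then b x else a x,
    ha.ite hlt hb, hb.ite hlt ha, fun x => ?_, ?_⟩
  · dsimp only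
    split_ifs
    · rfl
    · exact Set.pair_comm _ _
  · filter_upwards [hmass, hpair, hasymm] with x hx hab hx'
    rcases Set.pair_eq_pair_iff.1 hab with ⟨h1, h2⟩ | ⟨h1, h2⟩ <;>
      rw [h1, h2, hx, hx]
    · exact (apply_ite (g x) _ _ _).symm
    · rcases hx'.lt_or_gt with h | h
      · rw [if_pos h, if_neg h.asymm]
      · rw [if_neg h.asymm, if_pos h]

lemma exists_measurable_forall_ae_mass_comp_eq (herg : Ergodic f μ)
    (hg : ∀ x, Measurable (g x)) (hinj : ∀ x, Function.Injective (g x)) {a b : X → P}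
    (ha : Measurable a) (hb : Measurable b)
    (hpair : ∀ᵐ x ∂μ, ({a (f x), b (f x)} : Set P) = {g x (a x), g x (b x)}) :
    ∃ E₁ E₂ : X → P, Measurable E₁ ∧ Measurable E₂ ∧
      (∀ x, ({E₁ x, E₂ x} : Set P) = {a x, b x}) ∧
      ∀ κ : Kernel X P, IsFiniteKernel κ → IsEquivariantKernel μ f g κ →
        ∀ᵐ x ∂μ, κ (f x) {E₁ (f x)} = κ x {E₁ x} := by
  by_cases hsymm : ∀ κ : Kernel X P, IsFiniteKernel κ → IsEquivariantKernel μ f g κ →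
      ∀ᵐ x ∂μ, κ x {a x} = κ x {b x}
  · refine ⟨a, b, ha, hb, fun _ => rfl, fun κ hfin hκ => ?_⟩
    filter_upwards [hpair, hsymm κ hfin hκ, hκ.ae_apply_comp_singleton hg hinj] with x hab hx hmass
    rcases Set.pair_eq_pair_iff.1 hab with ⟨h, -⟩ | ⟨h, -⟩ <;> rw [h, hmass]
    exact hx.symm
  · simp only [not_forall] at hsymm
    obtain ⟨κ₁, hfin₁, hκ₁, hne⟩ := hsymm
    obtain ⟨E₁, E₂, hE₁, hE₂, hE, hcomp⟩ := exists_ae_comp_eq_of_not_ae_eq_mass herg ha hb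
      (hκ₁.ae_apply_comp_singleton hg hinj) hpair hne
    refine ⟨E₁, E₂, hE₁, hE₂, hE, fun κ _ hκ => ?_⟩
    filter_upwards [hcomp, hκ.ae_apply_comp_singleton hg hinj] with x hx hmass
    rw [hx, hmass]

end MeasurableEq

variable [StandardBorelSpace P] [Nonempty P]

lemma ae_nontrivial_atoms_or_ae_subsingleton_atoms (herg : Ergodic f μ)
    (hg : ∀ x, Measurable (g x)) (hinj : ∀ x, Function.Injective (g x)) {κ : Kernel X P}
    (hκ : IsEquivariantKernel μ f g κ) (hpair : ∀ᵐ x ∂μ, ∃ p q, κ x {p, q}ᶜ = 0)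
    (hne : ∀ᵐ x ∂μ, κ x ≠ 0) :
    (∀ᵐ x ∂μ, (atoms (κ x)).Nontrivial) ∨ ∀ᵐ x ∂μ, (atoms (κ x)).Subsingleton := by
  obtain ⟨a, b, ha, hb, hab⟩ := exists_measurable_atoms κ
  have hset : {x | a x ≠ b x} =ᵐ[μ] {x | (atoms (κ x)).Nontrivial} := by
    refine Filter.Eventually.set_eq ?_
    filter_upwards [hpair, hne] with x hx hx0
    rw [hab x hx0 hx]
    exact ⟨Set.nontrivial_pair, fun h heq => by simp [heq] at h⟩
  have hinv : f ⁻¹' {x | (atoms (κ x)).Nontrivial} =ᵐ[μ] {x | (atoms (κ x)).Nontrivial} := by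
    refine Filter.Eventually.set_eq ?_
    filter_upwards [hκ.ae_atoms_comp hg hinj] with x hx
    rw [Set.mem_preimage, Set.mem_ofPred, hx]
    exact Set.image_nontrivial (hinj x)
  have hs : NullMeasurableSet {x | (atoms (κ x)).Nontrivial} μ :=
    (measurableSet_eq_fun ha hb).compl.nullMeasurableSet.congr hset
  simpa only [Set.mem_ofPred, Set.not_nontrivial_iff] using
    herg.quasiErgodic.ae_mem_or_ae_notMem₀ hs hinv

lemma exists_isEquivariantKernel_atoms_maximal (herg : Ergodic f μ)
    (hg : ∀ x, Measurable (g x)) (hinj : ∀ x, Function.Injective (g x))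
    (hpair : ∀ κ : Kernel X P, IsFiniteKernel κ → IsEquivariantKernel μ f g κ →
      ∀ᵐ x ∂μ, ∃ p q, κ x {p, q}ᶜ = 0)
    {κ₀ : Kernel X P} [IsMarkovKernel κ₀] (hκ₀ : IsEquivariantKernel μ f g κ₀) :
    ∃ κ₁ : Kernel X P, IsFiniteKernel κ₁ ∧ IsEquivariantKernel μ f g κ₁ ∧ (∀ᵐ x ∂μ, κ₁ x ≠ 0) ∧
      ∀ κ : Kernel X P, IsFiniteKernel κ → IsEquivariantKernel μ f g κ →
        ∀ᵐ x ∂μ, atoms (κ x) ⊆ atoms (κ₁ x) := by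
  by_cases h : ∃ κ₁ : Kernel X P, IsFiniteKernel κ₁ ∧ IsEquivariantKernel μ f g κ₁ ∧
      ∀ᵐ x ∂μ, (atoms (κ₁ x)).Nontrivial
  · obtain ⟨κ₁, hfin₁, hκ₁, hnontrivial⟩ := h
    refine ⟨κ₁, hfin₁, hκ₁, hnontrivial.mono fun x => ne_zero_of_nontrivial_atoms,
      fun κ _ hκ => ?_⟩
    filter_upwards [hnontrivial, hpair _ inferInstance (IsEquivariantKernel.add hg hκ hκ₁)]
      with x hx ⟨p, q, hpq⟩
    exact atoms_subset_of_nontrivial_atoms hx hpq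
  · refine ⟨κ₀, inferInstance, hκ₀, ae_of_all _ fun x => IsProbabilityMeasure.ne_zero _,
      fun κ _ hκ => ?_⟩
    have hadd := IsEquivariantKernel.add hg hκ hκ₀
    have hne : ∀ᵐ x ∂μ, (κ + κ₀) x ≠ 0 := ae_of_all _ fun x h0 =>
      IsProbabilityMeasure.ne_zero (κ₀ x) (bot_unique ((Measure.le_add_left le_rfl).trans h0.le))
    have hsub := (ae_nontrivial_atoms_or_ae_subsingleton_atoms herg hg hinj hadd
      (hpair _ inferInstance hadd) hne).resolve_left fun hnt => h ⟨_, inferInstance, hadd, hnt⟩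
    filter_upwards [hsub, hpair κ₀ inferInstance hκ₀] with x hx ⟨p, q, hpq⟩
    obtain ⟨r, hr⟩ := atoms_nonempty (IsProbabilityMeasure.ne_zero (κ₀ x))
      (measure_compl_atoms_eq_zero (Set.toFinite {p, q}).countable hpq)
    rw [FunLike.coe_add, Pi.add_apply, atoms_add] at hx
    exact fun s hs => hx (Or.inr hr) (Or.inl hs) ▸ hr

lemma exists_measurable_pair_carrying (herg : Ergodic f μ)
    (hg : ∀ x, Measurable (g x)) (hinj : ∀ x, Function.Injective (g x))
    (hpair : ∀ κ : Kernel X P, IsFiniteKernel κ → IsEquivariantKernel μ f g κ →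
      ∀ᵐ x ∂μ, ∃ p q, κ x {p, q}ᶜ = 0)
    {κ₀ : Kernel X P} [IsMarkovKernel κ₀] (hκ₀ : IsEquivariantKernel μ f g κ₀) :
    ∃ a b : X → P, Measurable a ∧ Measurable b ∧
      (∀ᵐ x ∂μ, ({a (f x), b (f x)} : Set P) = {g x (a x), g x (b x)}) ∧
      ∀ κ : Kernel X P, IsFiniteKernel κ → IsEquivariantKernel μ f g κ →
        ∀ᵐ x ∂μ, κ x {a x, b x}ᶜ = 0 := by
  obtain ⟨κ₁, hfin₁, hκ₁, hne, hmax⟩ :=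
    exists_isEquivariantKernel_atoms_maximal herg hg hinj hpair hκ₀
  obtain ⟨a, b, ha, hb, hatoms⟩ := exists_measurable_atoms κ₁
  have hab : ∀ᵐ x ∂μ, atoms (κ₁ x) = {a x, b x} := by
    filter_upwards [hne, hpair κ₁ hfin₁ hκ₁] with x using hatoms x
  refine ⟨a, b, ha, hb, ?_, fun κ hfin hκ => ?_⟩
  · filter_upwards [hab, herg.quasiMeasurePreserving.ae hab, hκ₁.ae_atoms_comp hg hinj]
      with x hx hfx hcomp
    rw [← hfx, hcomp, hx, Set.image_pair]
  · filter_upwards [hab, hmax κ hfin hκ, hpair κ hfin hκ] with x hx hsub ⟨p, q, hpq⟩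
    exact measure_mono_null (Set.compl_subset_compl.2 (hx ▸ hsub))
      (measure_compl_atoms_eq_zero (Set.toFinite {p, q}).countable hpq)

theorem exists_forall_isEquivariantKernel_eq_smul_dirac_add_smul_dirac (herg : Ergodic f μ)
    (hg : ∀ x, Measurable (g x)) (hinj : ∀ x, Function.Injective (g x))
    (hpair : ∀ κ : Kernel X P, IsFiniteKernel κ → IsEquivariantKernel μ f g κ →
      ∀ᵐ x ∂μ, ∃ p q, κ x {p, q}ᶜ = 0) :
    ∃ E₁ E₂ : X → P, Measurable E₁ ∧ Measurable E₂ ∧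
      ∀ κ : Kernel X P, IsMarkovKernel κ → IsEquivariantKernel μ f g κ →
        ∃ c : ℝ≥0∞, c ≤ 1 ∧
          ∀ᵐ x ∂μ, κ x = c • Measure.dirac (E₁ x) + (1 - c) • Measure.dirac (E₂ x) := by
  by_cases h : ∃ κ₀ : Kernel X P, IsMarkovKernel κ₀ ∧ IsEquivariantKernel μ f g κ₀
  · obtain ⟨κ₀, hprob₀, hκ₀⟩ := h
    obtain ⟨a, b, ha, hb, hab, hcarried⟩ :=
      exists_measurable_pair_carrying herg hg hinj hpair hκ₀
    obtain ⟨E₁, E₂, hE₁, hE₂, hE, hmass⟩ :=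
      exists_measurable_forall_ae_mass_comp_eq herg hg hinj ha hb hab
    refine ⟨E₁, E₂, hE₁, hE₂, fun κ _ hκ => ?_⟩
    refine exists_ae_eq_smul_dirac_add_smul_dirac herg hE₁ ?_ (hmass κ inferInstance hκ)
    simpa only [hE] using hcarried κ inferInstance hκ
  · obtain ⟨p⟩ := ‹Nonempty P›
    exact ⟨fun _ => p, fun _ => p, measurable_const, measurable_const,
      fun κ hprob hκ => absurd ⟨κ, hprob, hκ⟩ h⟩

end ErgodicPairs

lemma abs_det_cocycleIter {X : Type*} {d : ℕ} {A : X → GL (Fin d) ℝ}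
    (hdet : ∀ x, |(A x : Matrix (Fin d) (Fin d) ℝ).det| = 1) (f : X → X) (n : ℕ) (x : X) :
    |((cocycleIter f A n x : GL (Fin d) ℝ) : Matrix (Fin d) (Fin d) ℝ).det| = 1 := by
  induction n generalizing x with
  | zero => rw [cocycleIter, Units.val_one, Matrix.det_one, abs_one]
  | succ n ih => rw [cocycleIter, Units.val_mul, Matrix.det_mul, abs_mul, ih, hdet, one_mul]

lemma normalizedNorm_cocycleIter {X : Type*} {A : X → GL (Fin 2) ℝ}
    (hdet : ∀ x, |(A x : Matrix (Fin 2) (Fin 2) ℝ).det| = 1) (f : X → X) (n : ℕ) (x : X) :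
    normalizedNorm (cocycleIter f A n x) =
      opNorm ((cocycleIter f A n x : GL (Fin 2) ℝ) : Matrix (Fin 2) (Fin 2) ℝ) := by
  rw [normalizedNorm, abs_det_cocycleIter hdet, Real.sqrt_one, div_one]

theorem stmt4_general {X : Type*} [MeasurableSpace X] (μ : Measure X) [IsFiniteMeasure μ]
    {f : X → X} (hf : MeasurableEmbedding f) (herg : Ergodic f μ) {A : X → GL (Fin 2) ℝ}
    (hA : Measurable fun x => (A x : Matrix (Fin 2) (Fin 2) ℝ))
    (hunb : ∀ᵐ x ∂μ,
      ConvergesEssentiallyToInfinity fun n => normalizedNorm (cocycleIter f A n x)) :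
    ∃ E₁ E₂ : X → Proj 2, Measurable E₁ ∧ Measurable E₂ ∧
      ∀ μhat : Measure (X × Proj 2), μhat.map Prod.fst = μ →
        μhat.map (fun q : X × Proj 2 => (f q.1, projAction (A q.1) q.2)) = μhat →
        ∃ l : ℝ, 0 ≤ l ∧ l ≤ 1 ∧
          μhat = ENNReal.ofReal l • μ.map (fun x => (x, E₁ x)) +
            ENNReal.ofReal (1 - l) • μ.map (fun x => (x, E₂ x)) := by
  have hg : Measurable (Function.uncurry fun x => projAction (A x)) := measurable_projAction hA
  obtain ⟨E₁, E₂, hE₁, hE₂, hkernel⟩ :=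
    exists_forall_isEquivariantKernel_eq_smul_dirac_add_smul_dirac herg
      (fun x => hg.comp measurable_prodMk_left) (fun x => projAction_injective (A x))
      fun κ _ hκ => ae_exists_measure_compl_pair_eq_zero herg.toMeasurePreserving hA hunb hκ
  refine ⟨E₁, E₂, hE₁, hE₂, fun μhat hfst hinv => ?_⟩
  obtain ⟨κ, hprob, hκ, rfl⟩ :=
    exists_isEquivariantKernel_compProd_eq herg.toMeasurePreserving hf hg hfst hinv
  obtain ⟨c, hc, hdirac⟩ := hkernel κ hprob hκ
  have hctop : c ≠ ∞ := ne_top_of_le_ne_top ENNReal.one_ne_top hc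
  refine ⟨c.toReal, ENNReal.toReal_nonneg, ENNReal.toReal_mono ENNReal.one_ne_top hc, ?_⟩
  rw [ENNReal.ofReal_sub _ ENNReal.toReal_nonneg, ENNReal.ofReal_one, ENNReal.ofReal_toReal hctop]
  exact compProd_eq_smul_map_add_smul_map hE₁ hE₂ hdirac

/-- For an essentially unbounded `SL±(2)`-valued cocycle over an ergodic
invertible transformation, there are two measurable families of projective points such that
every invariant probability measure on `X × ℙ(ℝ²)` is a convex combination of the graphs. -/
theorem stmt4
    {X : Type*} [MeasurableSpace X] [StandardBorelSpace X]
    (μ : Measure X) [IsProbabilityMeasure μ]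
    (f : X → X) (hbij : Function.Bijective f) (herg : Ergodic f μ)
    (A : X → GL (Fin 2) ℝ)
    (hA : Measurable fun x => ((A x : Matrix (Fin 2) (Fin 2) ℝ)))
    (hdet : ∀ x, (A x : Matrix (Fin 2) (Fin 2) ℝ).det = 1 ∨
                 (A x : Matrix (Fin 2) (Fin 2) ℝ).det = -1)
    (hunb : ∀ᵐ x ∂μ, ConvergesEssentiallyToInfinity fun n =>
        opNorm ((cocycleIter f A n x : GL (Fin 2) ℝ) : Matrix (Fin 2) (Fin 2) ℝ))
    :
    ∃ E₁ E₂ : X → Proj 2, Measurable E₁ ∧ Measurable E₂ ∧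
      ∀ μhat : Measure (X × Proj 2), IsProbabilityMeasure μhat →
        μhat.map Prod.fst = μ →
        μhat.map (fun q : X × Proj 2 => (f q.1, projAction (A q.1) q.2)) = μhat →
        ∃ l : ℝ, 0 ≤ l ∧ l ≤ 1 ∧
          μhat = ENNReal.ofReal l • μ.map (fun x => (x, E₁ x)) +
            ENNReal.ofReal (1 - l) • μ.map (fun x => (x, E₂ x)) := by
  obtain ⟨E₁, E₂, hE₁, hE₂, h⟩ :=
    stmt4_general μ (herg.measurable.measurableEmbedding hbij.injective) herg hA <| by
      simpa only [normalizedNorm_cocycleIter fun x => (abs_eq zero_le_one).2 (hdet x)] using hunb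
  exact ⟨E₁, E₂, hE₁, hE₂, fun μhat _ => h μhat⟩
end
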